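/- arXiv:1801.09169 — 2 statements merged into one kernel-verified Lean document; each statement's English description precedes it below -/
import Mathlib

section
/- Let Q be a finite quiver with no oriented cycles, K an algebraically closed field, and let d = Σ_{r=1}^s d^{(r)} be the canonical decomposition of the dimension vector d. Then the generic number of parameters of Rep_d(KQ) is μ(d) = Σ_{r=1}^s (1 − ⟨d^{(r)}, d^{(r)}⟩), where ⟨−,−⟩ is the Euler form of Q. In particular, Rep_d(KQ) contains a dense GL(d)-orbit if and only if Σ_{r=1}^s (1 − ⟨d^{(r)}, d^{(r)}⟩) = 0. -/
open Finset

/-! # Varieties of representations of a quiver with relations: basic setup -/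

/-- The Zariski topology on the affine space `ι → K`: it is generated by the basic open
sets `D(p) = {x | p(x) ≠ 0}`, where `p` ranges over multivariate polynomials. -/
def zariskiTopology (ι K : Type) [CommSemiring K] : TopologicalSpace (ι → K) :=
  TopologicalSpace.generateFrom
    {U | ∃ p : MvPolynomial ι K, U = {x | MvPolynomial.eval x p ≠ 0}}

/-- A finite quiver `Q`: vertices `Fin n`, arrows `Fin numArrows` with source and
target maps. -/
structure QuiverData where
  n : ℕ
  numArrows : ℕ
  src : Fin numArrows → Fin n
  tgt : Fin numArrows → Fin n

namespace QuiverData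

variable (Q : QuiverData) (d : Fin Q.n → ℕ) (K : Type) [Field K]

/-- Index of the coordinates of the affine space of `d`-dimensional representations:
for each arrow `a` a matrix entry index in `Fin (d (tgt a)) × Fin (d (src a))`. -/
abbrev Coords := Σ a : Fin Q.numArrows, Fin (d (Q.tgt a)) × Fin (d (Q.src a))

/-- The affine space of `d`-dimensional representations of `Q`:
a point `x` assigns to each arrow `a` a `d (tgt a) × d (src a)` matrix over `K`. -/
abbrev RepSpace := Coords Q d → K

/-- `RepSpace` carries the Zariski topology. -/
noncomputable instance instRepTop : TopologicalSpace (RepSpace Q d K) :=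
  zariskiTopology (Coords Q d) K

/-- The underlying `K`-vector space `⊕ᵢ K^{dᵢ}` of any `d`-dimensional representation. -/
abbrev Carrier := (Σ i : Fin Q.n, Fin (d i)) → K

/-- The projection onto the component of the `i`-th vertex (action of the primitive
idempotent `eᵢ`). -/
def proj (i : Fin Q.n) : Carrier Q d K →ₗ[K] Carrier Q d K where
  toFun m := fun jv => if jv.1 = i then m jv else 0
  map_add' u v := by
    funext jv; by_cases h : jv.1 = i <;> simp [h]
  map_smul' c u := by
    funext jv; by_cases h : jv.1 = i <;> simp [h]

/-- The action of the arrow `a` on the carrier space of the representation `x`. -/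
noncomputable def arrowMap (x : RepSpace Q d K) (a : Fin Q.numArrows) :
    Carrier Q d K →ₗ[K] Carrier Q d K where
  toFun m := fun jv =>
    if h : jv.1 = Q.tgt a then
      ∑ w : Fin (d (Q.src a)), x ⟨a, (Fin.cast (congrArg d h) jv.2, w)⟩ * m ⟨Q.src a, w⟩
    else 0
  map_add' u v := by
    funext jv
    by_cases h : jv.1 = Q.tgt a <;> simp [h, mul_add, Finset.sum_add_distrib]
  map_smul' c u := by
    funext jv
    by_cases h : jv.1 = Q.tgt a <;>
      simp [h, Finset.mul_sum, mul_comm, mul_left_comm, mul_assoc]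

/-- The action of a word `w = [a_k, …, a_1]` of arrows on the representation `x`
(the arrow `a_1` acts first; non-composable words act as `0`). -/
noncomputable def wordMap (x : RepSpace Q d K) (w : List (Fin Q.numArrows)) :
    Module.End K (Carrier Q d K) :=
  (w.map fun a => (arrowMap Q d K x a : Module.End K (Carrier Q d K))).prod

/-- The submodule `J^l · M_x` of the module `M_x`: the sum of the images of all words of
arrows of length `l` (for an admissible ideal, the radical acts through the arrows). -/
noncomputable def radPow (x : RepSpace Q d K) (l : ℕ) : Submodule K (Carrier Q d K) :=
  ⨆ w : {w : List (Fin Q.numArrows) // w.length = l},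
    LinearMap.range (wordMap Q d K x w.1)

/-- The socle series of `M_x`: `socPow x l = soc_l(M_x)`. -/
noncomputable def socPow (x : RepSpace Q d K) : ℕ → Submodule K (Carrier Q d K)
  | 0 => ⨅ a, LinearMap.ker (arrowMap Q d K x a)
  | (l+1) => ⨅ a, (socPow x l).comap (arrowMap Q d K x a)

/-- The dimension, at the vertex `i`, of a (vertex-graded) subspace `N`. -/
noncomputable def vdim (N : Submodule K (Carrier Q d K)) (i : Fin Q.n) : ℕ :=
  Module.finrank K (N.map (proj Q d K i))

/-- The radical layering `S(M_x) = (M/JM, JM/J²M, …, J^L M/J^{L+1} M)` of the module `M_x`,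
recorded through the dimension vectors of its semisimple layers. -/
noncomputable def radLayering (L : ℕ) (x : RepSpace Q d K) :
    Fin (L+1) → Fin Q.n → ℕ :=
  fun l i => vdim Q d K (radPow Q d K x l) i - vdim Q d K (radPow Q d K x (l+1)) i

/-- The socle layering `S*(M_x) = (soc₀M, soc₁M/soc₀M, …)` of the module `M_x`, recorded
through the dimension vectors of its semisimple layers. -/
noncomputable def socLayering (L : ℕ) (x : RepSpace Q d K) :
    Fin (L+1) → Fin Q.n → ℕ :=
  fun l i => vdim Q d K (socPow Q d K x l) i -
    (if (l : ℕ) = 0 then 0 else vdim Q d K (socPow Q d K x ((l : ℕ) - 1)) i)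

end QuiverData

/-- The dominance order on semisimple sequences (recorded as sequences of dimension
vectors): `dominates S S'` means `S ≤ S'`, i.e. `⊕_{j≤l} S_j ⊆ ⊕_{j≤l} S'_j` for all `l`. -/
def dominates {n L : ℕ} (S S' : Fin (L+1) → Fin n → ℕ) : Prop :=
  ∀ (l : Fin (L+1)) (i : Fin n),
    ∑ j ∈ Finset.univ.filter (fun j => j ≤ l), S j i ≤
      ∑ j ∈ Finset.univ.filter (fun j => j ≤ l), S' j i

/-- A semisimple sequence has dimension vector `d` if its layers' dimension vectors sum
to `d`. -/
def hasDimVec {n L : ℕ} (S : Fin (L+1) → Fin n → ℕ) (d : Fin n → ℕ) : Prop :=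
  ∀ i, ∑ l, S l i = d i

namespace QuiverData

variable (Q : QuiverData) (d : Fin Q.n → ℕ) (K : Type) [Field K]

/-- Evaluation of a formal noncommutative polynomial in the vertices (`Sum.inl`) and
arrows (`Sum.inr`) of `Q` on the representation `x`; an element of the path algebra `KQ`
is represented by such a polynomial. -/
noncomputable def evalRel (x : RepSpace Q d K) :
    FreeAlgebra K (Fin Q.n ⊕ Fin Q.numArrows) →ₐ[K] Module.End K (Carrier Q d K) :=
  FreeAlgebra.lift K
    (Sum.elim (fun i => (proj Q d K i : Module.End K (Carrier Q d K)))
      (fun a => (arrowMap Q d K x a : Module.End K (Carrier Q d K))))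

/-- The affine variety `Rep_d(Λ)` for `Λ = KQ/I`, where the ideal `I` is generated by the
set `R` of relations: the set of points of `RepSpace` annihilating every relation. -/
def RepVar (R : Set (FreeAlgebra K (Fin Q.n ⊕ Fin Q.numArrows))) :
    Set (RepSpace Q d K) :=
  {x | ∀ r ∈ R, evalRel Q d K x r = 0}

/-- The affine variety `Rep_d(Λ)` for the truncated path algebra
`Λ = KQ/⟨all paths of length L+1⟩`. -/
def TruncRepVar (L : ℕ) : Set (RepSpace Q d K) :=
  {x | ∀ w : List (Fin Q.numArrows), w.length = L + 1 → wordMap Q d K x w = 0}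

/-- A submodule of `M_x`, i.e. a subspace stable under the arrows and the vertex
idempotents. -/
def Stable (x : RepSpace Q d K) (N : Submodule K (Carrier Q d K)) : Prop :=
  (∀ a, N.map (arrowMap Q d K x a) ≤ N) ∧ ∀ i, N.map (proj Q d K i) ≤ N

/-- A submodule `N` of `M_x` is indecomposable (as a module). -/
def IndecompSub (x : RepSpace Q d K) (N : Submodule K (Carrier Q d K)) : Prop :=
  N ≠ ⊥ ∧ ∀ N₁ N₂ : Submodule K (Carrier Q d K),
    Stable Q d K x N₁ → Stable Q d K x N₂ → N₁ ≤ N → N₂ ≤ N →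
    N₁ ⊔ N₂ = N → N₁ ⊓ N₂ = ⊥ → N₁ = ⊥ ∨ N₂ = ⊥

/-- The module `M_x` is indecomposable. -/
def IndecompRep (x : RepSpace Q d K) : Prop :=
  IndecompSub Q d K x ⊤

/-- The module `M_x` is uniserial: its submodules form a chain. -/
def UniserialRep (x : RepSpace Q d K) : Prop :=
  ∀ N₁ N₂ : Submodule K (Carrier Q d K),
    Stable Q d K x N₁ → Stable Q d K x N₂ → N₁ ≤ N₂ ∨ N₂ ≤ N₁

/-- `M_x` decomposes as a direct sum of `s` indecomposable submodules whose dimension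
vectors are `D 0, …, D (s-1)`. -/
def DecompWith (x : RepSpace Q d K) (s : ℕ) (D : Fin s → Fin Q.n → ℕ) : Prop :=
  ∃ N : Fin s → Submodule K (Carrier Q d K),
    (∀ r, Stable Q d K x (N r)) ∧
    (∀ r, Disjoint (N r) (⨆ t, ⨆ (_ : t ≠ r), N t)) ∧
    (⨆ r, N r) = ⊤ ∧
    (∀ r, IndecompSub Q d K x (N r)) ∧
    ∀ r i, vdim Q d K (N r) i = D r i

/-- A homomorphism of representations `M_x → M_y` (for possibly different dimension
vectors): a linear map commuting with the arrow actions and the vertex projections. -/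
def RepHom (dx dy : Fin Q.n → ℕ) (x : RepSpace Q dx K) (y : RepSpace Q dy K)
    (φ : Carrier Q dx K →ₗ[K] Carrier Q dy K) : Prop :=
  (∀ a, φ ∘ₗ arrowMap Q dx K x a = arrowMap Q dy K y a ∘ₗ φ) ∧
  ∀ i, φ ∘ₗ proj Q dx K i = proj Q dy K i ∘ₗ φ

/-- The submodule `N` of `M_x` is isomorphic, as a representation, to `M_y`. -/
def SubrepIso (dy : Fin Q.n → ℕ) (x : RepSpace Q d K)
    (N : Submodule K (Carrier Q d K)) (y : RepSpace Q dy K) : Prop :=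
  ∃ φ : Carrier Q d K →ₗ[K] Carrier Q dy K,
    N ⊓ LinearMap.ker φ = ⊥ ∧ N.map φ = ⊤ ∧
    (∀ a, ∀ m ∈ N, φ (arrowMap Q d K x a m) = arrowMap Q dy K y a (φ m)) ∧
    (∀ i, ∀ m ∈ N, φ (proj Q d K i m) = proj Q dy K i (φ m))

/-- The representations `M_x` and `M_y` are isomorphic; the isomorphism classes are
exactly the orbits of the `GL(d)`-action. -/
def IsoRep (x y : RepSpace Q d K) : Prop :=
  ∃ φ : Carrier Q d K ≃ₗ[K] Carrier Q d K,
    (∀ a m, φ (arrowMap Q d K x a m) = arrowMap Q d K y a (φ m)) ∧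
    ∀ i m, φ (proj Q d K i m) = proj Q d K i (φ m)

/-- The `GL(d)`-orbit of the point `x`, i.e. the set of points encoding modules
isomorphic to `M_x`. -/
def orbitSet (x : RepSpace Q d K) : Set (RepSpace Q d K) :=
  {y | IsoRep Q d K x y}

/-- Given a family `P` of varieties `Rep_dv(Λ)` (one for every dimension vector `dv`),
`Ext¹_Λ(M_x, M_y) = 0`: every extension `0 → M_y → E → M_x → 0` of `Λ`-modules splits. -/
def Ext1Zero (P : ∀ dv : Fin Q.n → ℕ, Set (RepSpace Q dv K))
    (dx dy : Fin Q.n → ℕ) (x : RepSpace Q dx K) (y : RepSpace Q dy K) : Prop :=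
  ∀ z ∈ P (fun i => dx i + dy i),
    ∀ (ι : Carrier Q dy K →ₗ[K] Carrier Q (fun i => dx i + dy i) K)
      (π : Carrier Q (fun i => dx i + dy i) K →ₗ[K] Carrier Q dx K),
      RepHom Q K dy (fun i => dx i + dy i) y z ι →
      RepHom Q K (fun i => dx i + dy i) dx z x π →
      Function.Injective ι → Function.Surjective π →
      LinearMap.ker π = LinearMap.range ι →
      ∃ σ : Carrier Q dx K →ₗ[K] Carrier Q (fun i => dx i + dy i) K,
        RepHom Q K dx (fun i => dx i + dy i) x z σ ∧ π ∘ₗ σ = LinearMap.id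

/-- The direct sum `C₁ ⊕ ⋯ ⊕ C_s` of subvarieties `C_r ⊆ Rep_{D r}(Λ)`: the set of
points `x ∈ Rep_d(Λ)` whose module decomposes as `M_x ≅ ⊕_r M^{(r)}` with `M^{(r)}`
encoded by a point of `C_r`. -/
def DirectSumSet (s : ℕ) (D : Fin s → Fin Q.n → ℕ)
    (Cs : ∀ r : Fin s, Set (RepSpace Q (D r) K)) : Set (RepSpace Q d K) :=
  {x | ∃ N : Fin s → Submodule K (Carrier Q d K),
    (∀ r, Stable Q d K x (N r)) ∧
    (∀ r, Disjoint (N r) (⨆ t, ⨆ (_ : t ≠ r), N t)) ∧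
    (⨆ r, N r) = ⊤ ∧
    ∀ r, ∃ y ∈ Cs r, SubrepIso Q d K (D r) x (N r) y}

/-- The endomorphism space `End_Λ(M_x)` of the module `M_x`. -/
def endSpace (x : RepSpace Q d K) :
    Submodule K (Carrier Q d K →ₗ[K] Carrier Q d K) where
  carrier := {φ | RepHom Q K d d x x φ}
  add_mem' := by
    intro φ ψ hφ hψ
    exact ⟨fun a => by rw [LinearMap.add_comp, LinearMap.comp_add, hφ.1 a, hψ.1 a],
      fun i => by rw [LinearMap.add_comp, LinearMap.comp_add, hφ.2 i, hψ.2 i]⟩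
  zero_mem' := by
    exact ⟨fun a => by simp, fun i => by simp⟩
  smul_mem' := by
    intro c φ hφ
    exact ⟨fun a => by rw [LinearMap.smul_comp, LinearMap.comp_smul, hφ.1 a],
      fun i => by rw [LinearMap.smul_comp, LinearMap.comp_smul, hφ.2 i]⟩

/-- A word of arrows is a (composable) path when read in function-composition order. -/
def IsPathWord (w : List (Fin Q.numArrows)) : Prop :=
  List.Chain' (fun a b => Q.src a = Q.tgt b) w

/-- The quiver `Q` has no oriented cycles. -/
def Acyclic : Prop :=
  ∀ (a : Fin Q.numArrows) (w : List (Fin Q.numArrows)),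
    IsPathWord Q (a :: w) →
      Q.tgt a ≠ Q.src ((a :: w).getLast (List.cons_ne_nil a w))

/-- A filtration `M_x = F 0 ⊇ F 1 ⊇ ⋯ ⊇ F (L+1) = 0` by submodules which is governed by
the semisimple sequence `S`: each layer `F l / F (l+1)` is semisimple, isomorphic to `S l`. -/
def Governed (L : ℕ) (x : RepSpace Q d K) (S : Fin (L+1) → Fin Q.n → ℕ)
    (F : Fin (L+2) → Submodule K (Carrier Q d K)) : Prop :=
  F 0 = ⊤ ∧ F (Fin.last (L+1)) = ⊥ ∧
  (∀ l : Fin (L+1), F l.succ ≤ F l.castSucc) ∧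
  (∀ (l : Fin (L+2)) (i : Fin Q.n), (F l).map (proj Q d K i) ≤ F l) ∧
  (∀ (l : Fin (L+1)) (a : Fin Q.numArrows),
      (F l.castSucc).map (arrowMap Q d K x a) ≤ F l.succ) ∧
  ∀ (l : Fin (L+1)) (i : Fin Q.n),
      vdim Q d K (F l.castSucc) i = S l i + vdim Q d K (F l.succ) i

/-- `Filt S`: the set of points whose module has a filtration governed by `S`. -/
def FiltSet (L : ℕ) (S : Fin (L+1) → Fin Q.n → ℕ) : Set (RepSpace Q d K) :=
  {x | ∃ F, Governed Q d K L x S F}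

/-- `Γ(M_x)`: the number of semisimple sequences which are realizable (i.e. occur as the
radical layering of a module in the variety `P`) and which govern some filtration of `M_x`. -/
noncomputable def gammaCount (L : ℕ) (P : Set (RepSpace Q d K))
    (x : RepSpace Q d K) : ℕ :=
  Set.ncard {S : Fin (L+1) → Fin Q.n → ℕ |
    (∃ y ∈ P, radLayering Q d K L y = S) ∧ ∃ F, Governed Q d K L x S F}

/-- `Sstar` is the generic (= minimal, attained) socle layering of the modules in `W`. -/
def GenSoc (L : ℕ) (W : Set (RepSpace Q d K))
    (Sstar : Fin (L+1) → Fin Q.n → ℕ) : Prop :=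
  (∀ x ∈ W, dominates Sstar (socLayering Q d K L x)) ∧
  ∃ x ∈ W, socLayering Q d K L x = Sstar

end QuiverData

namespace QuiverData

variable (Q : QuiverData)

/-- The `i`-th entry of the row vector `e·A` (over `ℤ`), where `A` is the adjacency
matrix of `Q`: the sum of `e (src a)` over all arrows `a` ending at `i`. -/
def inflowZ (e : Fin Q.n → ℤ) (i : Fin Q.n) : ℤ :=
  ∑ a ∈ Finset.univ.filter (fun a => Q.tgt a = i), e (Q.src a)

/-- The `i`-th entry of the row vector `e·B` (over `ℤ`), where `B` is the transpose of
the adjacency matrix of `Q`. -/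
def outflowZ (e : Fin Q.n → ℤ) (i : Fin Q.n) : ℤ :=
  ∑ a ∈ Finset.univ.filter (fun a => Q.src a = i), e (Q.tgt a)

/-- Partial sums `t⁽⁰⁾ + ⋯ + t⁽ˡ⁾` of the recursion
`t⁽⁰⁾ = sup{0, d − d·A}`, `t⁽ˡ⁺¹⁾ = sup{0, (d − ∑_{k≤l} t⁽ᵏ⁾) − (d − ∑_{k≤l} t⁽ᵏ⁾)·A}`
(computed componentwise). -/
def cumLayer (dz : Fin Q.n → ℤ) : ℕ → Fin Q.n → ℤ
  | 0 => fun i => max 0 (dz i - inflowZ Q dz i)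
  | (l+1) => fun i =>
      cumLayer dz l i +
        max 0 ((dz i - cumLayer dz l i) -
          inflowZ Q (fun j => dz j - cumLayer dz l j) i)

/-- The positive part `∑ᵢ eᵢ fᵢ` of the Euler form of `Q`. -/
def eulerHomPart (e f : Fin Q.n → ℕ) : ℕ := ∑ i, e i * f i

/-- The negative part `∑_{α} e_{src α} f_{tgt α}` of the Euler form of `Q`, so that
`⟨e, f⟩ = eulerHomPart e f − eulerExtPart e f`. -/
def eulerExtPart (e f : Fin Q.n → ℕ) : ℕ :=
  ∑ a, e (Q.src a) * f (Q.tgt a)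

end QuiverData

/-- The quiver with a single vertex and `r` loops. -/
def QuiverData.loopQuiver (r : ℕ) : QuiverData :=
  ⟨1, r, fun _ => 0, fun _ => 0⟩

namespace QuiverData

variable (Q : QuiverData) (d : Fin Q.n → ℕ) (K : Type) [Field K]

/-- The variety `Rep_d(Λ)` for `Λ = KQ/⟨Rels⟩`, regarded as a topological space with the
(subspace) Zariski topology. -/
abbrev GenV (Rels : Set (FreeAlgebra K (Fin Q.n ⊕ Fin Q.numArrows))) :=
  {y : RepSpace Q d K // y ∈ RepVar Q d K Rels}

/-- The variety `Rep_d(Λ)` for the truncated path algebra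
`Λ = KQ/⟨paths of length L+1⟩`, regarded as a topological space. -/
abbrev TruncV (L : ℕ) := {y : RepSpace Q d K // y ∈ TruncRepVar Q d K L}

end QuiverData

open Finset

/-! ### Part I: the Zariski topology on affine space -/

section Affine

attribute [local instance] zariskiTopology

variable {ι κ K : Type} [Field K]

lemma zar_isOpen_basic (p : MvPolynomial ι K) :
    IsOpen {x : ι → K | MvPolynomial.eval x p ≠ 0} :=
  TopologicalSpace.isOpen_generateFrom_of_mem ⟨p, rfl⟩

lemma zar_basis {U : Set (ι → K)} (hU : IsOpen U) {x : ι → K} (hx : x ∈ U) :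
    ∃ p : MvPolynomial ι K, MvPolynomial.eval x p ≠ 0 ∧
      ∀ y, MvPolynomial.eval y p ≠ 0 → y ∈ U := by
  induction hU with
  | basic s hs =>
    obtain ⟨p, rfl⟩ := hs
    exact ⟨p, hx, fun y hy => hy⟩
  | univ => exact ⟨1, by simp, fun y _ => trivial⟩
  | inter s t _ _ ihs iht =>
    obtain ⟨p, hp, hp'⟩ := ihs hx.1
    obtain ⟨q, hq, hq'⟩ := iht hx.2
    refine ⟨p * q, by simp [hp, hq], fun y hy => ?_⟩
    simp only [map_mul, ne_eq, mul_eq_zero, not_or] at hy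
    exact ⟨hp' y hy.1, hq' y hy.2⟩
  | sUnion S _ ih =>
    obtain ⟨s, hs, hxs⟩ := hx
    obtain ⟨p, hp, hp'⟩ := ih s hs hxs
    exact ⟨p, hp, fun y hy => ⟨s, hs, hp' y hy⟩⟩

lemma zar_inter_nonempty [Infinite K] {U V : Set (ι → K)} (hU : IsOpen U) (hV : IsOpen V)
    (hU' : U.Nonempty) (hV' : V.Nonempty) : (U ∩ V).Nonempty := by
  obtain ⟨x, hx⟩ := hU'
  obtain ⟨y, hy⟩ := hV'
  obtain ⟨p, hp, hp'⟩ := zar_basis hU hx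
  obtain ⟨q, hq, hq'⟩ := zar_basis hV hy
  have hp0 : p ≠ 0 := by rintro rfl; simp at hp
  have hq0 : q ≠ 0 := by rintro rfl; simp at hq
  by_contra hne
  apply mul_ne_zero hp0 hq0
  apply MvPolynomial.funext
  intro z
  by_contra hz
  simp only [map_mul, map_zero, mul_eq_zero, not_or] at hz
  exact hne ⟨z, hp' z hz.1, hq' z hz.2⟩

lemma zar_irred [Infinite K] : IsIrreducible (Set.univ : Set (ι → K)) := by
  refine ⟨⟨fun _ => 0, trivial⟩, ?_⟩
  rintro U V hU hV ⟨x, _, hx⟩ ⟨y, _, hy⟩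
  simpa using zar_inter_nonempty hU hV ⟨x, hx⟩ ⟨y, hy⟩

/-- Regular functions on a subset of affine space: a quotient of two polynomials with
denominator not vanishing on the subset. -/
def RegOn (A : Set (ι → K)) (f : (ι → K) → K) : Prop :=
  ∃ u v : MvPolynomial ι K, ∀ a ∈ A, MvPolynomial.eval a v ≠ 0 ∧
    f a * MvPolynomial.eval a v = MvPolynomial.eval a u

namespace RegOn

variable {A B : Set (ι → K)} {f g : (ι → K) → K}

lemma const (A : Set (ι → K)) (c : K) : RegOn A (fun _ => c) :=
  ⟨MvPolynomial.C c, 1, fun a _ => by simp⟩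

lemma coord (A : Set (ι → K)) (i : ι) : RegOn A (fun a => a i) :=
  ⟨MvPolynomial.X i, 1, fun a _ => by simp⟩

lemma add (hf : RegOn A f) (hg : RegOn A g) : RegOn A (fun a => f a + g a) := by
  obtain ⟨u, v, h⟩ := hf
  obtain ⟨u', v', h'⟩ := hg
  refine ⟨u * v' + u' * v, v * v', fun a ha => ⟨?_, ?_⟩⟩
  · simp [(h a ha).1, (h' a ha).1]
  · simp only [map_mul, map_add, ← (h a ha).2, ← (h' a ha).2]; ring

lemma mul (hf : RegOn A f) (hg : RegOn A g) : RegOn A (fun a => f a * g a) := by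
  obtain ⟨u, v, h⟩ := hf
  obtain ⟨u', v', h'⟩ := hg
  refine ⟨u * u', v * v', fun a ha => ⟨?_, ?_⟩⟩
  · simp [(h a ha).1, (h' a ha).1]
  · simp only [map_mul, ← (h a ha).2, ← (h' a ha).2]; ring

lemma neg (hf : RegOn A f) : RegOn A (fun a => - f a) := by
  simpa using (const A (-1)).mul hf

lemma sub (hf : RegOn A f) (hg : RegOn A g) : RegOn A (fun a => f a - g a) := by
  simpa [sub_eq_add_neg] using hf.add hg.neg

lemma inv (hf : RegOn A f) (h0 : ∀ a ∈ A, f a ≠ 0) : RegOn A (fun a => (f a)⁻¹) := by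
  obtain ⟨u, v, h⟩ := hf
  refine ⟨v, u, fun a ha => ⟨?_, ?_⟩⟩
  · rw [← (h a ha).2]; exact mul_ne_zero (h0 a ha) (h a ha).1
  · rw [← (h a ha).2]; field_simp [h0 a ha]

lemma sum {α : Type*} (s : Finset α) {f : α → (ι → K) → K} (hf : ∀ j, RegOn A (f j)) :
    RegOn A (fun a => ∑ j ∈ s, f j a) := by
  classical
  induction s using Finset.induction_on with
  | empty => simpa using const A 0
  | insert j s hj ih => simpa [Finset.sum_insert hj] using (hf j).add ih

lemma prod {α : Type*} (s : Finset α) {f : α → (ι → K) → K} (hf : ∀ j, RegOn A (f j)) :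
    RegOn A (fun a => ∏ j ∈ s, f j a) := by
  classical
  induction s using Finset.induction_on with
  | empty => simpa using const A 1
  | insert j s hj ih => simpa [Finset.prod_insert hj] using (hf j).mul ih

lemma det {α : Type*} [Fintype α] [DecidableEq α] {M : (ι → K) → Matrix α α K}
    (hM : ∀ i j, RegOn A (fun a => M a i j)) : RegOn A (fun a => (M a).det) := by
  simp only [Matrix.det_apply']
  exact sum _ fun σ => (const A _).mul (prod _ fun i => hM _ _)

lemma matinv {α : Type*} [Fintype α] [DecidableEq α] {M : (ι → K) → Matrix α α K}
    (hM : ∀ i j, RegOn A (fun a => M a i j)) (h0 : ∀ a ∈ A, (M a).det ≠ 0) (i j : α) :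
    RegOn A (fun a => (M a)⁻¹ i j) := by
  simp only [Matrix.inv_def, Ring.inverse_eq_inv', Matrix.smul_apply, smul_eq_mul,
    Matrix.adjugate_apply]
  refine ((det hM).inv h0).mul (det fun k l => ?_)
  by_cases hk : k = j
  · subst hk; simpa using const A _
  · simpa [Matrix.updateRow_ne hk] using hM k l

lemma matmul {α β γ : Type*} [Fintype β] {M : (ι → K) → Matrix α β K}
    {N : (ι → K) → Matrix β γ K}
    (hM : ∀ i j, RegOn A (fun a => M a i j)) (hN : ∀ i j, RegOn A (fun a => N a i j))
    (i : α) (j : γ) : RegOn A (fun a => (M a * N a) i j) := by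
  simp only [Matrix.mul_apply]
  exact sum _ fun k => (hM _ _).mul (hN _ _)

lemma mono (h : B ⊆ A) (hf : RegOn A f) : RegOn B f := by
  obtain ⟨u, v, h'⟩ := hf
  exact ⟨u, v, fun a ha => h' a (h ha)⟩

lemma comp {F : (ι → K) → (κ → K)} {C : Set (κ → K)} {f : (κ → K) → K} (hf : RegOn C f)
    (hF : ∀ j, RegOn A (fun a => F a j)) (hFC : ∀ a ∈ A, F a ∈ C) :
    RegOn A (fun a => f (F a)) := by
  have key : ∀ p : MvPolynomial κ K, RegOn A (fun a => MvPolynomial.eval (F a) p) := by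
    intro p
    induction p using MvPolynomial.induction_on with
    | C c => simpa using const A c
    | add p q hp hq => simpa using hp.add hq
    | mul_X p j hp => simpa using hp.mul (hF j)
  obtain ⟨u, v, h⟩ := hf
  obtain ⟨u', v', h'⟩ := (key u).mul ((key v).inv fun a ha => (h _ (hFC a ha)).1)
  refine ⟨u', v', fun a ha => ⟨(h' a ha).1, ?_⟩⟩
  rw [← (h' a ha).2]
  have h1 := (h _ (hFC a ha)).1
  have h2 := (h _ (hFC a ha)).2
  simp only
  rw [← h2]
  field_simp

lemma isOpen_ne (hA : IsOpen A) (hf : RegOn A f) : IsOpen {a | a ∈ A ∧ f a ≠ 0} := by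
  obtain ⟨u, v, h⟩ := hf
  have : {a | a ∈ A ∧ f a ≠ 0} = A ∩ {a | MvPolynomial.eval a u ≠ 0} := by
    ext a
    simp only [Set.mem_ofPred_eq, Set.mem_inter_iff, and_congr_right_iff]
    intro ha
    rw [← (h a ha).2]
    simp [(h a ha).1]
  rw [this]
  exact hA.inter (zar_isOpen_basic u)

lemma continuousOn {F : (ι → K) → (κ → K)} (hF : ∀ j, RegOn A (fun a => F a j)) :
    ContinuousOn F A := by
  rw [continuousOn_iff_continuous_domRestrict]
  refine continuous_generateFrom_iff.2 ?_
  rintro _ ⟨p, rfl⟩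
  have hp : RegOn (Set.univ : Set (κ → K)) (fun x => MvPolynomial.eval x p) :=
    ⟨p, 1, fun a _ => by simp⟩
  obtain ⟨u, v, h⟩ := hp.comp hF (fun _ _ => trivial)
  have : A.domRestrict F ⁻¹' {x | MvPolynomial.eval x p ≠ 0}
      = Subtype.val ⁻¹' {a | MvPolynomial.eval a u ≠ 0} := by
    ext ⟨a, ha⟩
    simp only [Set.mem_preimage, Set.domRestrict_apply, Set.mem_ofPred_eq]
    rw [← (h a ha).2]
    simp [(h a ha).1]
  rw [this]
  exact (zar_isOpen_basic u).preimage continuous_subtype_val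

end RegOn

lemma zar_closed_eq {C : Set (ι → K)} (hC : IsClosed C) {x : ι → K}
    (hx : ∀ p : MvPolynomial ι K, (∀ y ∈ C, MvPolynomial.eval y p = 0) →
      MvPolynomial.eval x p = 0) : x ∈ C := by
  by_contra hxC
  obtain ⟨p, hp, hp'⟩ := zar_basis hC.isOpen_compl hxC
  refine hp (hx p fun y hy => ?_)
  by_contra h
  exact hp' y h hy

lemma zar_dim_le [Fintype ι] : topologicalKrullDim (ι → K) ≤ (Fintype.card ι : ℕ) := by
  have h1 : ringKrullDim (MvPolynomial ι K) = (Fintype.card ι : ℕ) := by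
    rw [MvPolynomial.ringKrullDim_of_isNoetherianRing, ringKrullDim_eq_zero_of_field]
    simp
  rw [← h1]
  let I : TopologicalSpace.IrreducibleCloseds (ι → K) → PrimeSpectrum (MvPolynomial ι K) :=
    fun C => ⟨MvPolynomial.vanishingIdeal K (C : Set (ι → K)), by
      refine ⟨?_, ?_⟩
      · obtain ⟨x, hx⟩ := C.isIrreducible.nonempty
        intro h
        have : (1 : MvPolynomial ι K) ∈ MvPolynomial.vanishingIdeal K (C : Set (ι → K)) := by
          rw [h]; trivial
        simpa using MvPolynomial.mem_vanishingIdeal_iff.1 this x hx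
      · intro p q hpq
        by_contra hcon
        simp only [not_or, MvPolynomial.mem_vanishingIdeal_iff, not_forall] at hcon
        obtain ⟨⟨x, hx, hpx⟩, ⟨y, hy, hqy⟩⟩ := hcon
        obtain ⟨z, hz, hpz, hqz⟩ := C.isIrreducible.2 _ _ (zar_isOpen_basic p)
          (zar_isOpen_basic q) ⟨x, hx, by simpa using hpx⟩ ⟨y, hy, by simpa using hqy⟩
        have := MvPolynomial.mem_vanishingIdeal_iff.1 hpq z hz
        simp only [map_mul, mul_eq_zero] at this
        rcases this with h | h
        · exact hpz (by simpa using h)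
        · exact hqz (by simpa using h)⟩
  have hI : ∀ C D, I C ≤ I D → D ≤ C := by
    intro C D h x hx
    refine zar_closed_eq C.isClosed fun p hp => ?_
    have h2 : p ∈ MvPolynomial.vanishingIdeal K (C : Set (ι → K)) :=
      MvPolynomial.mem_vanishingIdeal_iff.2 fun y hy => by simpa using hp y hy
    simpa using MvPolynomial.mem_vanishingIdeal_iff.1 (h h2) x hx
  have hI' : ∀ C D, D ≤ C → I C ≤ I D := fun C D h =>
    MvPolynomial.vanishingIdeal_anti_mono h
  have : StrictMono (fun C => OrderDual.toDual (I C)) := by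
    intro C D h
    refine lt_of_le_not_ge (hI' _ _ h.le) fun h' => ?_
    exact h.not_ge (hI _ _ h')
  have h2 := Order.krullDim_le_of_strictMono _ this
  rw [Order.krullDim_orderDual] at h2
  exact h2

/-- coordinate flags through a point -/
lemma zar_flag [Infinite K] [Fintype ι] (x : ι → K) :
    ∃ C : Fin (Fintype.card ι + 1) → TopologicalSpace.IrreducibleCloseds (ι → K),
      StrictMono C ∧ (C 0 : Set (ι → K)) = {x} := by
  classical
  let e := Fintype.equivFin ι
  let F : Fin (Fintype.card ι + 1) → Set (ι → K) :=
    fun k => {y | ∀ i, (k : ℕ) ≤ (e i : ℕ) → y i = x i}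
  have hcl : ∀ k, IsClosed (F k) := by
    intro k
    have : F k = ⋂ i, ⋂ (_ : (k : ℕ) ≤ (e i : ℕ)), {y | y i = x i} := by
      ext y; simp [F]
    rw [this]
    refine isClosed_iInter fun i => isClosed_iInter fun _ => ?_
    have := zar_isOpen_basic (MvPolynomial.X i - MvPolynomial.C (x i) : MvPolynomial ι K)
    rw [← isOpen_compl_iff]
    convert this using 1
    ext y
    simp [sub_eq_zero]
  have hirr : ∀ k, IsIrreducible (F k) := by
    intro k
    let g : (ι → K) → (ι → K) := fun y i => if (k : ℕ) ≤ (e i : ℕ) then x i else y i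
    have hg : ContinuousOn g Set.univ := by
      refine RegOn.continuousOn fun j => ?_
      by_cases h : (k : ℕ) ≤ (e j : ℕ)
      · simpa [g, h] using RegOn.const _ (x j)
      · simpa [g, h] using RegOn.coord _ j
    have := zar_irred.image g hg
    convert this using 1
    ext y
    simp only [F, Set.mem_ofPred_eq, Set.image_univ, Set.mem_range, g]
    constructor
    · intro h
      refine ⟨y, funext fun i => ?_⟩
      by_cases hi : (k : ℕ) ≤ (e i : ℕ) <;> simp [hi]
      exact (h i hi).symm
    · rintro ⟨z, rfl⟩ i hi
      simp [hi]
  refine ⟨fun k => ⟨F k, hirr k, hcl k⟩, ?_, ?_⟩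
  · intro k l hkl
    refine lt_of_le_not_ge (fun y hy i hi => hy i (le_trans (Fin.le_def.1 hkl.le) hi)) ?_
    intro h
    have hk : (k : ℕ) < Fintype.card ι := by have := l.2; have := Fin.lt_def.1 hkl; omega
    let i := e.symm ⟨k, hk⟩
    let y : ι → K := Function.update x i (x i + 1)
    have hy : y ∈ F l := by
      intro j hj
      have : j ≠ i := by
        rintro rfl
        simp only [i, Equiv.apply_symm_apply] at hj
        have := Fin.lt_def.1 hkl; omega
      simp [y, this]
    have := h hy i (by simp [i])
    simp [y] at this
  · ext y
    simp only [TopologicalSpace.IrreducibleCloseds.coe_mk, F, Set.mem_ofPred_eq,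
      Set.mem_singleton_iff, Fin.val_zero, zero_le, forall_true_left]
    exact funext_iff.symm

lemma zar_dim_open [Infinite K] [Fintype ι] {V : Set (ι → K)} (hV : IsOpen V)
    (hne : V.Nonempty) : topologicalKrullDim V = (Fintype.card ι : ℕ) := by
  apply le_antisymm ((topologicalKrullDim_subspace_le _ V).trans zar_dim_le)
  obtain ⟨x, hx⟩ := hne
  obtain ⟨C, hC, hC0⟩ := zar_flag x
  have hcl : IsClosed ({⟨x, hx⟩} : Set V) := by
    have := (hC0 ▸ (C 0).isClosed : IsClosed {x}).preimage
      (continuous_subtype_val (p := fun y => y ∈ V))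
    convert this using 1
    ext y
    simp [Subtype.ext_iff]
  let Z : TopologicalSpace.IrreducibleCloseds V := ⟨{⟨x, hx⟩}, isIrreducible_singleton, hcl⟩
  have h1 := Topology.IsOpenEmbedding.coheight_map hV.isOpenEmbedding_subtypeVal Z
  have hZ : TopologicalSpace.IrreducibleCloseds.map Subtype.val
      hV.isOpenEmbedding_subtypeVal.continuous Z = C 0 := by
    apply SetLike.coe_injective
    rw [hC0]
    have : closure ({x} : Set (ι → K)) = {x} := (hC0 ▸ (C 0).isClosed : IsClosed {x}).closure_eq
    simpa [Z] using this
  rw [hZ] at h1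
  have h2 : ((Fintype.card ι : ℕ) : ℕ∞) ≤ Order.coheight (C 0) := by
    have := Order.length_le_coheight_head (p := ⟨Fintype.card ι, C,
      fun i => hC (Fin.castSucc_lt_succ)⟩)
    exact this
  rw [h1] at h2
  calc ((Fintype.card ι : ℕ) : WithBot ℕ∞) = (((Fintype.card ι : ℕ) : ℕ∞) : WithBot ℕ∞) := rfl
    _ ≤ (Order.coheight Z : WithBot ℕ∞) := by exact_mod_cast h2
    _ ≤ _ := Order.coheight_le_krullDim Z

lemma zar_dim [Infinite K] [Fintype ι] :
    topologicalKrullDim (ι → K) = (Fintype.card ι : ℕ) := by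
  apply le_antisymm zar_dim_le
  rw [← zar_dim_open (isOpen_univ : IsOpen (Set.univ : Set (ι → K))) ⟨fun _ => 0, trivial⟩]
  exact topologicalKrullDim_subspace_le _ _

end Affine

lemma dim_le_of_local {X : Type*} [TopologicalSpace X] (n : WithBot ℕ∞)
    (h : ∀ x : X, ∃ V : Set X, IsOpen V ∧ x ∈ V ∧ topologicalKrullDim V ≤ n) :
    topologicalKrullDim X ≤ n := by
  by_cases hX : Nonempty (TopologicalSpace.IrreducibleCloseds X)
  · rw [topologicalKrullDim, Order.krullDim_eq_iSup_coheight_of_nonempty, ]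
    rw [WithBot.coe_iSup (OrderTop.bddAbove _)]
    refine iSup_le fun Z => ?_
    obtain ⟨x, hx⟩ := Z.isIrreducible.nonempty
    obtain ⟨V, hV, hxV, hn⟩ := h x
    have hemb := hV.isOpenEmbedding_subtypeVal
    let Z' := (TopologicalSpace.IrreducibleCloseds.orderIsoOfIsOpenEmbedding _ hemb).symm
      ⟨Z, ⟨⟨x, hxV⟩, hx⟩⟩
    have h1 := Topology.IsOpenEmbedding.coheight_map hemb Z'
    have h2 : TopologicalSpace.IrreducibleCloseds.map _ hemb.continuous Z' = Z :=
      congrArg Subtype.val ((TopologicalSpace.IrreducibleCloseds.orderIsoOfIsOpenEmbedding _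
        hemb).apply_symm_apply ⟨Z, ⟨⟨x, hxV⟩, hx⟩⟩)
    rw [h2] at h1
    rw [h1]
    exact (Order.coheight_le_krullDim Z').trans hn
  · have : IsEmpty (TopologicalSpace.IrreducibleCloseds X) := not_nonempty_iff.1 hX
    rw [topologicalKrullDim, Order.krullDim_eq_bot]
    exact bot_le

open Finset

/-! ### Part II: operators attached to representations -/

namespace QuiverData

section Ops

attribute [local instance] zariskiTopology

variable (Q : QuiverData) (d : Fin Q.n → ℕ) (K : Type) [Field K]

/-- Endomorphisms of the carrier space. -/
abbrev EE := Module.End K (Carrier Q d K)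

/-- the vertex idempotents -/
abbrev pr (i : Fin Q.n) : EE Q d K := proj Q d K i

/-- the arrow operators -/
noncomputable abbrev ar (x : RepSpace Q d K) (a : Fin Q.numArrows) : EE Q d K :=
  arrowMap Q d K x a

variable {Q d K}

lemma pr_apply (i : Fin Q.n) (m : Carrier Q d K) (j) :
    pr Q d K i m j = if j.1 = i then m j else 0 := rfl

lemma pr_mul_self (i : Fin Q.n) : pr Q d K i * pr Q d K i = pr Q d K i := by
  apply LinearMap.ext; intro m; funext j
  simp only [Module.End.mul_apply, pr_apply]
  split_ifs <;> rfl

lemma pr_mul_ne {i j : Fin Q.n} (h : i ≠ j) : pr Q d K i * pr Q d K j = 0 := by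
  apply LinearMap.ext; intro m; funext k
  simp only [Module.End.mul_apply, pr_apply]
  split_ifs with h1 h2
  · exact absurd (h1.symm.trans h2) h
  · rfl
  · rfl

lemma sum_pr : ∑ i, pr Q d K i = 1 := by
  apply LinearMap.ext; intro m; funext k
  simp [LinearMap.sum_apply, Finset.sum_apply, pr_apply]

lemma ar_apply (x : RepSpace Q d K) (a) (m : Carrier Q d K) (jv) :
    ar Q d K x a m jv = if h : jv.1 = Q.tgt a then
      ∑ w : Fin (d (Q.src a)), x ⟨a, (Fin.cast (congrArg d h) jv.2, w)⟩ * m ⟨Q.src a, w⟩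
    else 0 := rfl

lemma pr_mul_ar (x : RepSpace Q d K) (a) : pr Q d K (Q.tgt a) * ar Q d K x a = ar Q d K x a := by
  apply LinearMap.ext; intro m; funext k
  simp only [Module.End.mul_apply, pr_apply, ar_apply]
  split_ifs <;> rfl

lemma ar_mul_pr (x : RepSpace Q d K) (a) : ar Q d K x a * pr Q d K (Q.src a) = ar Q d K x a := by
  apply LinearMap.ext; intro m; funext k
  simp only [Module.End.mul_apply, pr_apply, ar_apply]
  simp

variable (Q d K) in
/-- graded families of operators -/
def Rp : Submodule K (Fin Q.numArrows → EE Q d K) where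
  carrier := {z | ∀ a, pr Q d K (Q.tgt a) * z a * pr Q d K (Q.src a) = z a}
  add_mem' := by
    intro z z' h h' a
    simp only [Pi.add_apply, mul_add, add_mul, h a, h' a]
  zero_mem' := by intro a; simp
  smul_mem' := by
    intro c z h a
    simp only [Pi.smul_apply, mul_smul_comm, smul_mul_assoc, h a]

variable (Q d K) in
/-- representation as a family of operators, linear in the representation -/
noncomputable def arL : RepSpace Q d K →ₗ[K] (Fin Q.numArrows → EE Q d K) where
  toFun x := fun a => ar Q d K x a
  map_add' x y := by
    funext a; apply LinearMap.ext; intro m; funext k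
    simp only [Pi.add_apply, LinearMap.add_apply, ar_apply]
    split_ifs
    · simp [add_mul, Finset.sum_add_distrib]
    · simp
  map_smul' c x := by
    funext a; apply LinearMap.ext; intro m; funext k
    simp only [Pi.smul_apply, LinearMap.smul_apply, ar_apply, RingHom.id_apply]
    split_ifs
    · simp [Finset.mul_sum, mul_assoc]
    · simp

@[simp] lemma arL_apply (x : RepSpace Q d K) (a) : arL Q d K x a = ar Q d K x a := rfl

variable (Q d K) in
/-- coordinates of a family of operators -/
noncomputable def ofOp : (Fin Q.numArrows → EE Q d K) →ₗ[K] RepSpace Q d K where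
  toFun z := fun c => z c.1 (Pi.single ⟨Q.src c.1, c.2.2⟩ 1) ⟨Q.tgt c.1, c.2.1⟩
  map_add' x y := by funext c; simp
  map_smul' r x := by funext c; simp

lemma ofOp_arL (x : RepSpace Q d K) : ofOp Q d K (arL Q d K x) = x := by
  funext c
  obtain ⟨a, v, w⟩ := c
  change ar Q d K x a (Pi.single ⟨Q.src a, w⟩ 1) ⟨Q.tgt a, v⟩ = _
  rw [ar_apply]
  simp only [dite_true]
  rw [Finset.sum_eq_single w]
  · simp
  · intro b _ hb
    rw [Pi.single_eq_of_ne]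
    · simp
    · intro h; apply hb; simpa using h
  · simp

lemma arL_mem (x : RepSpace Q d K) : arL Q d K x ∈ Rp Q d K := by
  intro a
  rw [arL_apply, pr_mul_ar, ar_mul_pr]

lemma arL_ofOp {z : Fin Q.numArrows → EE Q d K} (hz : z ∈ Rp Q d K) :
    arL Q d K (ofOp Q d K z) = z := by
  funext a
  rw [← arL_mem _ a, ← hz a]
  refine (Pi.basisFun K _).ext fun k => ?_
  funext j
  simp only [Pi.basisFun_apply, Module.End.mul_apply, pr_apply, arL_apply]
  obtain ⟨k, w⟩ := k
  obtain ⟨j, v⟩ := j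
  by_cases hj : j = Q.tgt a
  · by_cases hk : k = Q.src a
    · subst hj; subst hk
      have : pr Q d K (Q.src a) (Pi.single ⟨Q.src a, w⟩ 1) = Pi.single ⟨Q.src a, w⟩ 1 := by
        funext l
        rw [pr_apply]
        by_cases hl : l = ⟨Q.src a, w⟩
        · subst hl; simp
        · simp [hl]
      simp only [if_true]
      rw [this]
      have h2 := congrFun (ofOp_arL (ofOp Q d K z)) ⟨a, v, w⟩
      exact h2
    · have : pr Q d K (Q.src a) (Pi.single (⟨k, w⟩ : Σ i, Fin (d i)) (1 : K)) = 0 := by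
        funext l
        rw [pr_apply]
        split_ifs with hl
        · rw [Pi.single_eq_of_ne]
          · rfl
          · rintro rfl; exact hk hl
        · rfl
      rw [this]; simp
  · simp [hj]

lemma finrank_Rp : Module.finrank K (Rp Q d K) = Fintype.card (Coords Q d) := by
  let e : RepSpace Q d K ≃ₗ[K] Rp Q d K :=
    { (arL Q d K).codRestrict (Rp Q d K) arL_mem with
      invFun := fun z => ofOp Q d K z
      left_inv := fun x => ofOp_arL x
      right_inv := fun z => Subtype.ext (arL_ofOp z.2) }
  rw [← e.finrank_eq, Module.finrank_fintype_fun_eq_card]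

variable (Q d K) in
/-- graded endomorphisms -/
def Gl : Submodule K (EE Q d K) where
  carrier := {g | ∀ i, g * pr Q d K i = pr Q d K i * g}
  add_mem' := by
    intro g g' h h' i
    simp only [mul_add, add_mul, h i, h' i]
  zero_mem' := by intro a; simp
  smul_mem' := by
    intro c g h a
    simp only [mul_smul_comm, smul_mul_assoc, h a]

lemma one_mem_Gl : (1 : EE Q d K) ∈ Gl Q d K := fun i => by simp

lemma mul_mem_Gl {g h : EE Q d K} (hg : g ∈ Gl Q d K) (hh : h ∈ Gl Q d K) :
    g * h ∈ Gl Q d K := fun i => by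
  rw [mul_assoc, hh i, ← mul_assoc, hg i, mul_assoc]

/-- `g X - Y g`. -/
noncomputable def LL (x y : RepSpace Q d K) :
    EE Q d K →ₗ[K] (Fin Q.numArrows → EE Q d K) where
  toFun g := fun a => g * ar Q d K x a - ar Q d K y a * g
  map_add' g h := by funext a; simp only [Pi.add_apply, mul_add, add_mul]; abel
  map_smul' c g := by
    funext a
    simp [smul_sub]

lemma LL_apply (x y : RepSpace Q d K) (g : EE Q d K) (a) :
    LL x y g a = g * ar Q d K x a - ar Q d K y a * g := rfl

lemma LL_mem_Rp (x y : RepSpace Q d K) {g : EE Q d K} (hg : g ∈ Gl Q d K) :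
    LL x y g ∈ Rp Q d K := by
  intro a
  rw [LL_apply, mul_sub, sub_mul]
  congr 1
  · rw [← mul_assoc, ← hg, mul_assoc, mul_assoc, ar_mul_pr, pr_mul_ar]
  · rw [← mul_assoc, pr_mul_ar, mul_assoc, hg, ← mul_assoc, ar_mul_pr]

lemma mem_orbit_iff (x y : RepSpace Q d K) :
    y ∈ orbitSet Q d K x ↔ ∃ g ∈ Gl Q d K, IsUnit g ∧ LL x y g = 0 := by
  constructor
  · rintro ⟨φ, h1, h2⟩
    refine ⟨φ.toLinearMap, fun i => ?_, ?_, ?_⟩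
    · apply LinearMap.ext; intro m; exact h2 i m
    · rw [Module.End.isUnit_iff]; exact φ.bijective
    · funext a
      rw [LL_apply, Pi.zero_apply, sub_eq_zero]
      apply LinearMap.ext; intro m; exact h1 a m
  · rintro ⟨g, hg, hu, h0⟩
    refine ⟨LinearEquiv.ofBijective g ((Module.End.isUnit_iff _).1 hu), fun a m => ?_,
      fun i m => ?_⟩
    · have := congrFun h0 a
      rw [LL_apply, Pi.zero_apply, sub_eq_zero] at this
      exact congrArg (fun f => f m) this
    · exact congrArg (fun f => f m) (hg i)

lemma self_mem_orbit (x : RepSpace Q d K) : x ∈ orbitSet Q d K x :=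
  (mem_orbit_iff x x).2 ⟨1, one_mem_Gl, isUnit_one, by funext a; simp [LL_apply]⟩

lemma orbit_eq {x y : RepSpace Q d K} (h : y ∈ orbitSet Q d K x) :
    orbitSet Q d K y = orbitSet Q d K x := by
  obtain ⟨φ, h1, h2⟩ := h
  ext z
  constructor
  · rintro ⟨ψ, h3, h4⟩
    refine ⟨φ.trans ψ, fun a m => ?_, fun i m => ?_⟩
    · simp [h1, h3]
    · simp [h2, h4]
  · rintro ⟨ψ, h3, h4⟩
    refine ⟨φ.symm.trans ψ, fun a m => ?_, fun i m => ?_⟩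
    · have : φ.symm (arrowMap Q d K y a m) = arrowMap Q d K x a (φ.symm m) := by
        rw [LinearEquiv.symm_apply_eq, h1]; simp
      simp [this, h3]
    · have : φ.symm (proj Q d K i m) = proj Q d K i (φ.symm m) := by
        rw [LinearEquiv.symm_apply_eq, h2]; simp
      simp [this, h4]

/-- the rank of the tangent map of the orbit map at `x` -/
noncomputable def rk (x : RepSpace Q d K) : ℕ := Module.finrank K ((Gl Q d K).map (LL x x))

end Ops

end QuiverData

open Finset

/-! ### Part III: local charts of orbits -/

lemma exists_dualFamily {K F : Type*} [Field K] [AddCommGroup F] [Module K F] {m : ℕ}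
    {β : Fin m → F} (hβ : LinearIndependent K β) :
    ∃ R : F →ₗ[K] (Fin m → K), ∀ j, R (β j) = Pi.single j 1 := by
  have hker : LinearMap.ker (Fintype.linearCombination K β) = ⊥ := by
    rw [LinearMap.ker_eq_bot']
    intro w hw
    funext j
    exact Fintype.linearIndependent_iff.1 hβ w hw j
  obtain ⟨R, hR⟩ := LinearMap.exists_leftInverse_of_injective _ hker
  refine ⟨R, fun j => ?_⟩
  have := congrArg (fun f => f (Pi.single j 1)) hR
  simpa using this

lemma exists_basis_lift {K E F : Type*} [Field K] [AddCommGroup E] [Module K E]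
    [AddCommGroup F] [Module K F] [FiniteDimensional K F] (T : E →ₗ[K] F) (G : Submodule K E) :
    ∃ b : Fin (Module.finrank K (G.map T)) → E, (∀ j, b j ∈ G) ∧
      LinearIndependent K (fun j => T (b j)) := by
  let β := Module.finBasis K (G.map T)
  have hb : ∀ j, ∃ b ∈ G, T b = β j := fun j => (β j).2
  choose b hbG hbβ using hb
  refine ⟨b, hbG, ?_⟩
  have : (fun j => T (b j)) = fun j => ((β j : G.map T) : F) := funext hbβ
  rw [this]
  exact β.linearIndependent.map' (Submodule.subtype _) (Submodule.ker_subtype _)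

lemma inj_of_dual {K F : Type*} [Field K] [AddCommGroup F] [Module K F] [FiniteDimensional K F]
    {S : Submodule K F} {m : ℕ} (hS : Module.finrank K S = m) (R : F →ₗ[K] (Fin m → K))
    {u : Fin m → F} (hu : ∀ j, u j ∈ S) (hR : ∀ j, R (u j) = Pi.single j 1)
    {z : F} (hz : z ∈ S) (h0 : R z = 0) : z = 0 := by
  classical
  let R' : S →ₗ[K] (Fin m → K) := R ∘ₗ S.subtype
  have hsurj : Function.Surjective R' := by
    intro v
    refine ⟨∑ j, v j • ⟨u j, hu j⟩, ?_⟩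
    rw [map_sum]
    simp only [map_smul]
    have : ∀ j, R' ⟨u j, hu j⟩ = Pi.single j 1 := hR
    simp only [this]
    funext i
    simp [Finset.sum_apply, Pi.single_apply]
  have hinj : Function.Injective R' :=
    (LinearMap.injective_iff_surjective_of_finrank_eq_finrank
      (by rw [hS, Module.finrank_fin_fun])).2 hsurj
  have h2 := hinj (a₁ := ⟨z, hz⟩) (a₂ := 0) (h0.trans (map_zero R').symm)
  exact congrArg Subtype.val h2

lemma dim_eq_of_maps {X Y : Type*} [TopologicalSpace X] [TopologicalSpace Y]
    {A : Set X} {B : Set Y} {f : X → Y} {g : Y → X}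
    (hf : ContinuousOn f A) (hg : ContinuousOn g B) (hfA : ∀ a ∈ A, f a ∈ B)
    (hgB : ∀ b ∈ B, g b ∈ A) (hgf : ∀ a ∈ A, g (f a) = a) (hfg : ∀ b ∈ B, f (g b) = b) :
    topologicalKrullDim A = topologicalKrullDim B := by
  let e : A ≃ₜ B :=
    { toFun := fun a => ⟨f a, hfA a a.2⟩
      invFun := fun b => ⟨g b, hgB b b.2⟩
      left_inv := fun a => Subtype.ext (hgf a a.2)
      right_inv := fun b => Subtype.ext (hfg b b.2)
      continuous_toFun := (continuousOn_iff_continuous_domRestrict.1 hf).subtype_mk _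
      continuous_invFun := (continuousOn_iff_continuous_domRestrict.1 hg).subtype_mk _ }
  exact e.isHomeomorph.topologicalKrullDim_eq

lemma RegOn.linear {ι K : Type} [Field K] [Fintype ι] (A : Set (ι → K))
    (φ : (ι → K) →ₗ[K] K) : RegOn A (fun a => φ a) := by
  classical
  have : ∀ a, φ a = ∑ i, a i * φ (Pi.single i 1) := by
    intro a
    conv_lhs => rw [← Finset.univ_sum_single a]
    rw [map_sum]
    refine Finset.sum_congr rfl fun i _ => ?_
    rw [← smul_eq_mul, ← map_smul, ← Pi.single_smul', smul_eq_mul, mul_one]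
  rw [show (fun a => φ a) = fun a => ∑ i, a i * φ (Pi.single i 1) from funext this]
  exact RegOn.sum _ fun i => (RegOn.coord A i).mul (RegOn.const A _)

namespace QuiverData

section Chart

attribute [local instance] zariskiTopology

variable {Q : QuiverData} {d : Fin Q.n → ℕ} {K : Type} [Field K]

/-- matrix of an operator -/
noncomputable abbrev mt (g : EE Q d K) :
    Matrix (Σ i : Fin Q.n, Fin (d i)) (Σ i : Fin Q.n, Fin (d i)) K := LinearMap.toMatrix' g

lemma isUnit_iff_mt (g : EE Q d K) : IsUnit g ↔ (mt g).det ≠ 0 := by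
  rw [LinearMap.det_toMatrix', LinearMap.isUnit_iff_isUnit_det, isUnit_iff_ne_zero]

lemma mt_mul (g h : EE Q d K) : mt (g * h) = mt g * mt h := LinearMap.toMatrix'_mul g h

/-- inverse operator (junk if not invertible) -/
noncomputable def gi (g : EE Q d K) : EE Q d K := Matrix.toLin' (mt g)⁻¹

lemma mt_gi (g : EE Q d K) : mt (gi g) = (mt g)⁻¹ := LinearMap.toMatrix'_toLin' _

lemma mul_gi {g : EE Q d K} (hg : IsUnit g) : g * gi g = 1 := by
  apply LinearMap.toMatrix'.injective
  change mt _ = mt _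
  rw [mt_mul, mt_gi, Matrix.mul_nonsing_inv _ (isUnit_iff_ne_zero.2 ((isUnit_iff_mt g).1 hg))]
  exact (LinearMap.toMatrix'_one).symm

lemma gi_mul {g : EE Q d K} (hg : IsUnit g) : gi g * g = 1 := by
  apply LinearMap.toMatrix'.injective
  change mt _ = mt _
  rw [mt_mul, mt_gi, Matrix.nonsing_inv_mul _ (isUnit_iff_ne_zero.2 ((isUnit_iff_mt g).1 hg))]
  exact (LinearMap.toMatrix'_one).symm

lemma gi_mem {g : EE Q d K} (hg : IsUnit g) (h : g ∈ Gl Q d K) : gi g ∈ Gl Q d K := by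
  intro i
  calc gi g * pr Q d K i = gi g * pr Q d K i * (g * gi g) := by rw [mul_gi hg, mul_one]
    _ = gi g * (pr Q d K i * g) * gi g := by simp only [mul_assoc]
    _ = gi g * (g * pr Q d K i) * gi g := by rw [h i]
    _ = (gi g * g) * pr Q d K i * gi g := by simp only [mul_assoc]
    _ = pr Q d K i * gi g := by rw [gi_mul hg, one_mul]

/-- conjugated family -/
noncomputable def cj (x : RepSpace Q d K) (g : EE Q d K) : RepSpace Q d K :=
  ofOp Q d K (fun a => g * ar Q d K x a * gi g)

lemma ar_cj (x : RepSpace Q d K) {g : EE Q d K} (hg : IsUnit g) (h : g ∈ Gl Q d K) (a) :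
    ar Q d K (cj x g) a = g * ar Q d K x a * gi g := by
  have : (fun a => g * ar Q d K x a * gi g) ∈ Rp Q d K := by
    intro a
    calc pr Q d K (Q.tgt a) * (g * ar Q d K x a * gi g) * pr Q d K (Q.src a)
        = (pr Q d K (Q.tgt a) * g) * ar Q d K x a * (gi g * pr Q d K (Q.src a)) := by
          simp only [mul_assoc]
      _ = g * (pr Q d K (Q.tgt a) * ar Q d K x a * pr Q d K (Q.src a)) * gi g := by
          rw [← h, gi_mem hg h]; simp only [mul_assoc]
      _ = _ := by rw [pr_mul_ar, ar_mul_pr]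
  exact congrFun (arL_ofOp this) a

lemma LL_cj (x : RepSpace Q d K) {g : EE Q d K} (hg : IsUnit g) (h : g ∈ Gl Q d K) :
    LL x (cj x g) g = 0 := by
  funext a
  rw [LL_apply, ar_cj x hg h, mul_assoc, gi_mul hg, mul_one, sub_self]; rfl

lemma cj_eq {x y : RepSpace Q d K} {g : EE Q d K} (hg : IsUnit g) (h : g ∈ Gl Q d K)
    (h0 : LL x y g = 0) : cj x g = y := by
  rw [← ofOp_arL (cj x g), ← ofOp_arL y]
  congr 1
  funext a
  rw [arL_apply, arL_apply, ar_cj x hg h]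
  have := congrFun h0 a
  rw [LL_apply, Pi.zero_apply, sub_eq_zero] at this
  rw [this, mul_assoc, mul_gi hg, mul_one]

lemma cj_regular {κ : Type} {A : Set (κ → K)} (x : RepSpace Q d K) {g : (κ → K) → EE Q d K}
    (hg : ∀ i j, RegOn A (fun w => mt (g w) i j)) (h0 : ∀ w ∈ A, (mt (g w)).det ≠ 0) (c) :
    RegOn A (fun w => cj x (g w) c) := by
  have : ∀ w, cj x (g w) c = (mt (g w) * mt (ar Q d K x c.1) * (mt (g w))⁻¹)
      ⟨Q.tgt c.1, c.2.1⟩ ⟨Q.src c.1, c.2.2⟩ := by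
    intro w
    rw [← mt_gi, ← mt_mul, ← mt_mul]
    simp only [cj, ofOp, mt, LinearMap.coe_mk, AddHom.coe_mk]
    rw [LinearMap.toMatrix'_apply]
  rw [show (fun w => cj x (g w) c) = fun w => (mt (g w) * mt (ar Q d K x c.1) * (mt (g w))⁻¹)
      ⟨Q.tgt c.1, c.2.1⟩ ⟨Q.src c.1, c.2.2⟩ from funext this]
  have h1 : ∀ i j, RegOn A (fun w => (mt (g w) * mt (ar Q d K x c.1)) i j) := fun i j =>
    RegOn.matmul (M := fun w => mt (g w)) (N := fun _ => mt (ar Q d K x c.1)) hg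
      (fun i j => RegOn.const A _) i j
  have h2 : ∀ i j, RegOn A (fun w => (mt (g w))⁻¹ i j) := fun i j =>
    RegOn.matinv (M := fun w => mt (g w)) hg h0 i j
  exact RegOn.matmul (M := fun w => mt (g w) * mt (ar Q d K x c.1))
    (N := fun w => (mt (g w))⁻¹) h1 h2 _ _

/-- `LL x y g` is affine linear in `y`. -/
lemma LL_regular {A : Set (RepSpace Q d K)} (x : RepSpace Q d K) (g : EE Q d K)
    (φ : (Fin Q.numArrows → EE Q d K) →ₗ[K] K) : RegOn A (fun y => φ (LL x y g)) := by
  let ψ : RepSpace Q d K →ₗ[K] K := φ ∘ₗ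
    (LinearMap.pi fun a => (LinearMap.mulRight K g) ∘ₗ (LinearMap.proj a) ∘ₗ (arL Q d K))
  have : ∀ y, φ (LL x y g) = φ (fun a => g * ar Q d K x a) - ψ y := by
    intro y
    simp only [ψ, LinearMap.comp_apply]
    rw [← map_sub]
    rfl
  simp only [this]
  exact (RegOn.const A _).sub (RegOn.linear A ψ)

variable [Infinite K]

set_option maxHeartbeats 1000000 in
theorem chart (x : RepSpace Q d K) :
    ∃ Ω : Set (RepSpace Q d K), IsOpen Ω ∧ x ∈ Ω ∧
      topologicalKrullDim ↥(Ω ∩ orbitSet Q d K x) = (rk x : ℕ) ∧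
      (Dense (orbitSet Q d K x) → Ω ⊆ orbitSet Q d K x) ∧
      (rk x = Fintype.card (Coords Q d) → Ω ⊆ orbitSet Q d K x) := by
  classical
  obtain ⟨m, hm, b, hbG, hβ⟩ : ∃ m, m = rk x ∧ ∃ b : Fin m → EE Q d K, (∀ j, b j ∈ Gl Q d K) ∧
      LinearIndependent K (fun j => LL x x (b j)) := ⟨_, rfl, exists_basis_lift (LL x x) (Gl Q d K)⟩
  obtain ⟨R, hR⟩ := exists_dualFamily hβ
  let M : RepSpace Q d K → Matrix (Fin m) (Fin m) K := fun y i j => R (LL x y (b j)) i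
  let c : RepSpace Q d K → Fin m → K := fun y => - R (LL x y 1)
  let W : RepSpace Q d K → Fin m → K := fun y => (M y)⁻¹.mulVec (c y)
  let g : (Fin m → K) → EE Q d K := fun w => 1 + ∑ j, w j • b j
  have hgG : ∀ w, g w ∈ Gl Q d K := fun w =>
    (Gl Q d K).add_mem one_mem_Gl ((Gl Q d K).sum_mem fun j _ => (Gl Q d K).smul_mem _ (hbG j))
  have hRg : ∀ y w, R (LL x y (g w)) = (M y).mulVec w - c y := by
    intro y w
    funext i
    simp only [g, map_add, map_sum, map_smul, M, c, Matrix.mulVec, dotProduct, Pi.add_apply,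
      Finset.sum_apply, Pi.smul_apply, smul_eq_mul, Pi.sub_apply, Pi.neg_apply, sub_neg_eq_add]
    rw [add_comm]
    congr 1
    exact Finset.sum_congr rfl fun j _ => mul_comm _ _
  have hWsol : ∀ y, (M y).det ≠ 0 → (M y).mulVec (W y) = c y := by
    intro y hy
    simp only [W, Matrix.mulVec_mulVec]
    rw [Matrix.mul_nonsing_inv _ (isUnit_iff_ne_zero.2 hy), Matrix.one_mulVec]
  have hWuniq : ∀ y w, (M y).det ≠ 0 → (M y).mulVec w = c y → W y = w := by
    intro y w hy h
    simp only [W, ← h, Matrix.mulVec_mulVec]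
    rw [Matrix.nonsing_inv_mul _ (isUnit_iff_ne_zero.2 hy), Matrix.one_mulVec]
  have hMx : M x = 1 := by
    ext i j
    simp only [M, hR, Matrix.one_apply, Pi.single_apply]
  have hLx1 : LL x x 1 = 0 := by funext a; simp [LL_apply]
  have hcx : c x = 0 := by simp only [c, hLx1, map_zero, neg_zero]
  have hWx : W x = 0 := by simp only [W, hcx, Matrix.mulVec_zero]
  have hg0 : g 0 = 1 := by simp [g]
  -- regularity
  have hMreg : ∀ (A : Set (RepSpace Q d K)) i j, RegOn A (fun y => M y i j) := by
    intro A i j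
    exact LL_regular x (b j) ((LinearMap.proj i) ∘ₗ R)
  have hcreg : ∀ (A : Set (RepSpace Q d K)) i, RegOn A (fun y => c y i) := by
    intro A i
    exact (LL_regular x 1 ((LinearMap.proj i) ∘ₗ R)).neg
  let Ω₀ : Set (RepSpace Q d K) := {y | y ∈ Set.univ ∧ (M y).det ≠ 0}
  have hΩ₀ : IsOpen Ω₀ := RegOn.isOpen_ne isOpen_univ (RegOn.det (hMreg _))
  have hWreg : ∀ i, RegOn Ω₀ (fun y => W y i) := by
    intro i
    simp only [W, Matrix.mulVec, dotProduct]
    exact RegOn.sum _ fun j => (RegOn.matinv (hMreg _) (fun y hy => hy.2) i j).mul (hcreg _ j)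
  have hgreg : ∀ (A : Set (Fin m → K)) i j, RegOn A (fun w => mt (g w) i j) := by
    intro A i j
    have : ∀ w, mt (g w) i j = mt (1 : EE Q d K) i j + ∑ k, w k * mt (b k) i j := by
      intro w
      simp only [g, mt, map_add, map_sum, map_smul, Matrix.add_apply, Matrix.sum_apply,
        Matrix.smul_apply, smul_eq_mul]
    simp only [this]
    exact (RegOn.const A _).add (RegOn.sum _ fun k => (RegOn.coord A k).mul (RegOn.const A _))
  have hgWreg : ∀ i j, RegOn Ω₀ (fun y => mt (g (W y)) i j) := fun i j =>
    (hgreg Set.univ i j).comp hWreg (fun _ _ => trivial)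
  let Ω : Set (RepSpace Q d K) := {y | y ∈ Ω₀ ∧ (mt (g (W y))).det ≠ 0}
  have hΩ : IsOpen Ω := RegOn.isOpen_ne hΩ₀ (RegOn.det hgWreg)
  have hΩsub : Ω ⊆ Ω₀ := fun y hy => hy.1
  let S₀ : Set (Fin m → K) := {w | w ∈ Set.univ ∧ (mt (g w)).det ≠ 0}
  have hS₀ : IsOpen S₀ := RegOn.isOpen_ne isOpen_univ (RegOn.det (hgreg _))
  let Φ : (Fin m → K) → RepSpace Q d K := fun w => cj x (g w)
  have hΦreg : ∀ k, RegOn S₀ (fun w => Φ w k) := fun k =>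
    cj_regular x (hgreg _) (fun w hw => hw.2) k
  let S : Set (Fin m → K) := {w | w ∈ S₀ ∧ (M (Φ w)).det ≠ 0}
  have hS : IsOpen S := RegOn.isOpen_ne hS₀
    (RegOn.det fun i j => (hMreg Set.univ i j).comp hΦreg (fun _ _ => trivial))
  have hSsub : S ⊆ S₀ := fun w hw => hw.1
  have hxΩ : x ∈ Ω := by
    refine ⟨⟨trivial, ?_⟩, ?_⟩
    · rw [hMx]; simp
    · rw [hWx, hg0, ← isUnit_iff_mt]; exact isUnit_one
  have hΦx : Φ 0 = x := by
    apply cj_eq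
    · rw [hg0]; exact isUnit_one
    · exact hgG 0
    · rw [hg0, hLx1]
  have h0S : (0 : Fin m → K) ∈ S := by
    refine ⟨⟨trivial, ?_⟩, ?_⟩
    · rw [hg0, ← isUnit_iff_mt]; exact isUnit_one
    · rw [hΦx, hMx]; simp
  have hΦW : ∀ w ∈ S, W (Φ w) = w := by
    intro w hw
    apply hWuniq _ _ hw.2
    have h1 : LL x (Φ w) (g w) = 0 := LL_cj x ((isUnit_iff_mt _).2 hw.1.2) (hgG w)
    have h2 := hRg (Φ w) w
    rw [h1, map_zero] at h2
    exact (sub_eq_zero.1 h2.symm)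
  have hΦmem : ∀ w ∈ S, Φ w ∈ Ω ∩ orbitSet Q d K x := by
    intro w hw
    refine ⟨⟨⟨trivial, hw.2⟩, ?_⟩, ?_⟩
    · rw [hΦW w hw]; exact hw.1.2
    · exact (mem_orbit_iff _ _).2 ⟨g w, hgG w, (isUnit_iff_mt _).2 hw.1.2,
        LL_cj x ((isUnit_iff_mt _).2 hw.1.2) (hgG w)⟩
  -- solving on the orbit
  have hsolve : ∀ y ∈ Ω₀, y ∈ orbitSet Q d K x → LL x y (g (W y)) = 0 := by
    intro y hy hyO
    obtain ⟨g₀, hg₀, hu, h0⟩ := (mem_orbit_iff _ _).1 hyO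
    have hLI : LinearIndependent K (fun j => LL x y (b j)) := by
      have h1 : LinearIndependent K (fun j => R (LL x y (b j))) :=
        Matrix.linearIndependent_cols_of_det_ne_zero (A := M y) hy.2
      exact h1.of_comp R
    have hle : Module.finrank K ((Gl Q d K).map (LL x y)) ≤ m := by
      let T : (Fin Q.numArrows → EE Q d K) →ₗ[K] (Fin Q.numArrows → EE Q d K) :=
        LinearMap.pi fun a => (LinearMap.mulLeft K g₀) ∘ₗ (LinearMap.proj a)
      have hsub : (Gl Q d K).map (LL x y) ≤ ((Gl Q d K).map (LL x x)).map T := by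
        rintro _ ⟨h, hh, rfl⟩
        refine ⟨_, ⟨gi g₀ * h, mul_mem_Gl (gi_mem hu hg₀) hh, rfl⟩, ?_⟩
        funext a
        change g₀ * LL x x (gi g₀ * h) a = LL x y h a
        have e1 := congrFun h0 a
        rw [LL_apply, Pi.zero_apply, sub_eq_zero] at e1
        rw [LL_apply, LL_apply, mul_sub]
        congr 1
        · rw [← mul_assoc, ← mul_assoc, mul_gi hu, one_mul]
        · rw [← mul_assoc, e1, mul_assoc, ← mul_assoc g₀, mul_gi hu, one_mul]
      calc _ ≤ _ := Submodule.finrank_mono hsub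
        _ ≤ _ := Submodule.finrank_map_le _ _
        _ = m := hm.symm
    have hspan : Submodule.span K (Set.range fun j => LL x y (b j)) = (Gl Q d K).map (LL x y) := by
      apply Submodule.eq_of_le_of_finrank_le
      · rw [Submodule.span_le]
        rintro _ ⟨j, rfl⟩
        exact ⟨b j, hbG j, rfl⟩
      · rw [finrank_span_eq_card hLI]
        simpa using hle
    have h1 : - LL x y 1 ∈ Submodule.span K (Set.range fun j => LL x y (b j)) := by
      rw [hspan]
      exact Submodule.neg_mem _ ⟨1, one_mem_Gl, rfl⟩
    obtain ⟨w, hw⟩ := (Submodule.mem_span_range_iff_exists_fun K).1 h1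
    have h2 : LL x y (g w) = 0 := by
      simp only [g, map_add, map_sum, map_smul]
      rw [hw]; simp
    have h3 := hRg y w
    rw [h2, map_zero] at h3
    rw [hWuniq y w hy.2 (sub_eq_zero.1 h3.symm), h2]
  have hback : ∀ y ∈ Ω ∩ orbitSet Q d K x, Φ (W y) = y := by
    rintro y ⟨hy, hyO⟩
    exact cj_eq ((isUnit_iff_mt _).2 hy.2) (hgG _) (hsolve y hy.1 hyO)
  have hWS : ∀ y ∈ Ω ∩ orbitSet Q d K x, W y ∈ S := by
    intro y hy
    refine ⟨⟨trivial, hy.1.2⟩, ?_⟩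
    rw [hback y hy]; exact hy.1.1.2
  have hin : ∀ y ∈ Ω, LL x y (g (W y)) = 0 → y ∈ orbitSet Q d K x := fun y hy h0 =>
    (mem_orbit_iff _ _).2 ⟨_, hgG _, (isUnit_iff_mt _).2 hy.2, h0⟩
  refine ⟨Ω, hΩ, hxΩ, ?_, ?_, ?_⟩
  · have h1 : ContinuousOn W (Ω ∩ orbitSet Q d K x) :=
      (RegOn.continuousOn hWreg).mono fun y hy => hy.1.1
    have h2 : ContinuousOn Φ S := (RegOn.continuousOn hΦreg).mono hSsub
    have h3 := dim_eq_of_maps h1 h2 hWS hΦmem hback hΦW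
    refine h3.trans ?_
    rw [zar_dim_open hS ⟨0, h0S⟩, ← hm]
    simp
  · intro hdense y₀ hy₀
    apply hin y₀ hy₀
    by_contra hne
    have : ∃ a i j, mt (LL x y₀ (g (W y₀)) a) i j ≠ 0 := by
      by_contra hcon
      push Not at hcon
      apply hne
      funext a
      apply LinearMap.toMatrix'.injective
      ext i j
      rw [Pi.zero_apply, map_zero]
      exact hcon a i j
    obtain ⟨a, i, j, haij⟩ := this
    have hreg : RegOn Ω (fun y => mt (LL x y (g (W y)) a) i j) := by
      have : ∀ y, mt (LL x y (g (W y)) a) i j = mt (LL x y 1 a) i j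
          + ∑ k, W y k * mt (LL x y (b k) a) i j := by
        intro y
        simp only [g, mt, map_add, map_sum, map_smul, Matrix.add_apply, Matrix.sum_apply,
          Matrix.smul_apply, smul_eq_mul, Pi.add_apply, Finset.sum_apply, Pi.smul_apply]
      simp only [this]
      let φ : (Fin Q.numArrows → EE Q d K) →ₗ[K] K :=
        (LinearMap.proj j) ∘ₗ (LinearMap.proj (R := K) (φ := fun _ => _ → K) i) ∘ₗ
          (LinearMap.toMatrix' (R := K)).toLinearMap ∘ₗ (LinearMap.proj a)
      exact (LL_regular x 1 φ).add
        (RegOn.sum _ fun k => ((hWreg k).mono hΩsub).mul (LL_regular x (b k) φ))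
    obtain ⟨y, hyO, hy⟩ := hdense.inter_open_nonempty _ (RegOn.isOpen_ne hΩ hreg) ⟨y₀, hy₀, haij⟩
    apply hyO.2
    rw [hsolve y hyO.1.1 hy]
    simp [mt]
  · intro hN y hy
    apply hin y hy
    have hfr : Module.finrank K (Rp Q d K) = m := by rw [finrank_Rp]; omega
    refine inj_of_dual (S := Rp Q d K) (u := fun j => LL x x (b j)) hfr R
      (fun j => LL_mem_Rp x x (hbG j)) hR (LL_mem_Rp x y (hgG _)) ?_
    rw [hRg, hWsol y hy.1.2, sub_self]

end Chart

end QuiverData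

open Finset

/-! ### Part IV: semicontinuity of the rank -/

section Semi

attribute [local instance] zariskiTopology

variable {ι K : Type} [Field K]

lemma line_mem [Infinite K] {U : Set (ι → K)} (hU : IsOpen U) {x : ι → K} (hx : x ∈ U)
    (z : ι → K) : ∃ t : K, t ≠ 0 ∧ x + t • z ∈ U := by
  obtain ⟨p, hp, hpU⟩ := zar_basis hU hx
  let q : Polynomial K := MvPolynomial.aeval
    (fun i => Polynomial.C (x i) + Polynomial.X * Polynomial.C (z i)) p
  have hq : ∀ t, Polynomial.eval t q = MvPolynomial.eval (x + t • z) p := by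
    intro t
    have : (Polynomial.aeval t).comp (MvPolynomial.aeval
        (fun i => Polynomial.C (x i) + Polynomial.X * Polynomial.C (z i)))
        = MvPolynomial.aeval (R := K) (x + t • z) := by
      ext i
      simp
      ring
    have h2 := congrArg (fun f => f p) this
    simp only [AlgHom.comp_apply, Polynomial.coe_aeval_eq_eval] at h2
    exact h2
  have hq0 : q ≠ 0 := by
    intro h
    apply hp
    have := hq 0
    rw [h, Polynomial.eval_zero, zero_smul, add_zero] at this
    exact this.symm
  by_contra hcon
  push Not at hcon
  have h3 : Polynomial.X * q = 0 := by
    apply Polynomial.funext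
    intro t
    rw [Polynomial.eval_mul, Polynomial.eval_X, Polynomial.eval_zero]
    by_cases ht : t = 0
    · rw [ht, zero_mul]
    · have := hcon t ht
      have h4 : MvPolynomial.eval (x + t • z) p = 0 := by
        by_contra h5
        exact this (hpU _ h5)
      rw [hq, h4, mul_zero]
  rcases mul_eq_zero.1 h3 with h | h
  · exact Polynomial.X_ne_zero h
  · exact hq0 h

lemma li_open {F : Type*} [AddCommGroup F] [Module K F] {m : ℕ} {u : Fin m → (ι → K) → F}
    (hu : ∀ (φ : F →ₗ[K] K) j, RegOn Set.univ (fun y => φ (u j y))) {x : ι → K}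
    (hx : LinearIndependent K (fun j => u j x)) :
    ∃ V : Set (ι → K), IsOpen V ∧ x ∈ V ∧ ∀ y ∈ V, LinearIndependent K (fun j => u j y) := by
  obtain ⟨R, hR⟩ := exists_dualFamily hx
  let M : (ι → K) → Matrix (Fin m) (Fin m) K := fun y i j => R (u j y) i
  have hM : ∀ i j, RegOn Set.univ (fun y => M y i j) := fun i j =>
    hu ((LinearMap.proj i) ∘ₗ R) j
  refine ⟨{y | y ∈ Set.univ ∧ (M y).det ≠ 0}, RegOn.isOpen_ne isOpen_univ (RegOn.det hM),
    ⟨trivial, ?_⟩, ?_⟩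
  · have : M x = 1 := by
      ext i j
      simp only [M, hR, Matrix.one_apply, Pi.single_apply]
    rw [this]; simp
  · intro y hy
    have h1 : LinearIndependent K (fun j => R (u j y)) :=
      Matrix.linearIndependent_cols_of_det_ne_zero (A := M y) hy.2
    exact h1.of_comp R

end Semi

lemma card_le_of_li {K F : Type*} [Field K] [AddCommGroup F] [Module K F] [FiniteDimensional K F]
    {S : Submodule K F} {m : ℕ} {u : Fin m → F} (hu : ∀ j, u j ∈ S)
    (hli : LinearIndependent K u) : m ≤ Module.finrank K S := by
  have h1 := finrank_span_eq_card hli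
  have h2 : Submodule.span K (Set.range u) ≤ S := by
    rw [Submodule.span_le]; rintro _ ⟨j, rfl⟩; exact hu j
  have h3 := Submodule.finrank_mono h2
  rw [h1, Fintype.card_fin] at h3
  exact h3

namespace QuiverData

section Semi2

attribute [local instance] zariskiTopology

variable {Q : QuiverData} {d : Fin Q.n → ℕ} {K : Type} [Field K]

/-- `LL z z h` as a linear map in `z`. -/
noncomputable def LD (h : EE Q d K) : RepSpace Q d K →ₗ[K] (Fin Q.numArrows → EE Q d K) where
  toFun z := LL z z h
  map_add' z w := by
    funext a
    have h1 : ar Q d K (z + w) a = ar Q d K z a + ar Q d K w a :=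
      congrFun (map_add (arL Q d K) z w) a
    simp only [LL_apply, Pi.add_apply, h1, mul_add, add_mul]
    abel
  map_smul' c z := by
    funext a
    have h1 : ar Q d K (c • z) a = c • ar Q d K z a :=
      congrFun (map_smul (arL Q d K) c z) a
    simp only [LL_apply, Pi.smul_apply, h1, mul_smul_comm, smul_mul_assoc, RingHom.id_apply,
      smul_sub]

lemma LD_apply (h : EE Q d K) (z : RepSpace Q d K) : LD h z = LL z z h := rfl

lemma LD_regular (h : EE Q d K) (φ : (Fin Q.numArrows → EE Q d K) →ₗ[K] K) :
    RegOn Set.univ (fun y : RepSpace Q d K => φ (LL y y h)) :=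
  RegOn.linear Set.univ (φ ∘ₗ LD h)

lemma rk_open (x : RepSpace Q d K) :
    ∃ V : Set (RepSpace Q d K), IsOpen V ∧ x ∈ V ∧ ∀ y ∈ V, rk x ≤ rk y := by
  obtain ⟨b, hbG, hβ⟩ := exists_basis_lift (LL x x) (Gl Q d K)
  obtain ⟨V, hV, hxV, h⟩ := li_open (u := fun j y => LL y y (b j))
    (fun φ j => LD_regular (b j) φ) hβ
  refine ⟨V, hV, hxV, fun y hy => ?_⟩
  exact card_le_of_li (S := (Gl Q d K).map (LL y y)) (fun j => ⟨b j, hbG j, rfl⟩) (h y hy)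

lemma exists_rk_max {U : Set (RepSpace Q d K)} (hU : Dense U) :
    ∃ x ∈ U, ∀ y : RepSpace Q d K, rk y ≤ rk x := by
  have hbd : ∀ y : RepSpace Q d K, rk y ≤ Module.finrank K (Fin Q.numArrows → EE Q d K) :=
    fun y => Submodule.finrank_le _
  obtain ⟨x, hx⟩ : ∃ x : RepSpace Q d K, ∀ y : RepSpace Q d K, rk y ≤ rk x := by
    have hfin : (Set.range (rk : RepSpace Q d K → ℕ)).Finite :=
      (Set.finite_Iic _).subset (by rintro _ ⟨y, rfl⟩; exact hbd y)
    obtain ⟨_, ⟨x, rfl⟩, hx⟩ := Set.exists_max_image _ id hfin ⟨_, ⟨0, rfl⟩⟩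
    exact ⟨x, fun y => hx _ ⟨y, rfl⟩⟩
  obtain ⟨V, hV, hxV, h⟩ := rk_open x
  obtain ⟨y, hyV, hyU⟩ := hU.inter_open_nonempty V hV ⟨x, hxV⟩
  exact ⟨y, hyU, fun w => (hx w).trans (h y hyV)⟩

lemma first_order [Infinite K] {x : RepSpace Q d K} (hx : ∀ y : RepSpace Q d K, rk y ≤ rk x)
    (z : RepSpace Q d K) {h : EE Q d K} (hh : h ∈ Gl Q d K) (h0 : LL x x h = 0) :
    LL z z h ∈ (Gl Q d K).map (LL x x) := by
  by_contra hcon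
  obtain ⟨m, hm, b, hbG, hβ⟩ : ∃ m, m = rk x ∧ ∃ b : Fin m → EE Q d K, (∀ j, b j ∈ Gl Q d K) ∧
      LinearIndependent K (fun j => LL x x (b j)) := ⟨_, rfl, exists_basis_lift (LL x x) (Gl Q d K)⟩
  let u : Fin (m + 1) → RepSpace Q d K → (Fin Q.numArrows → EE Q d K) := fun j y =>
    Fin.cons (α := fun _ => Fin Q.numArrows → EE Q d K) (LL z z h) (fun j => LL y y (b j)) j
  have hli : LinearIndependent K (fun j => u j x) := by
    have : LinearIndependent K (Fin.cons (LL z z h) (fun j => LL x x (b j)) :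
        Fin (m+1) → (Fin Q.numArrows → EE Q d K)) := by
      rw [linearIndependent_finCons]
      refine ⟨hβ, fun hmem => hcon ?_⟩
      refine Submodule.span_le.2 ?_ hmem
      rintro _ ⟨j, rfl⟩
      exact ⟨b j, hbG j, rfl⟩
    exact this
  obtain ⟨V, hV, hxV, hLI⟩ := li_open (u := u) (by
    intro φ j
    refine Fin.cases ?_ (fun j => ?_) j
    · exact RegOn.const (K := K) Set.univ (φ (LL z z h))
    · exact LD_regular (b j) φ) hli
  obtain ⟨t, ht, htV⟩ := line_mem hV hxV z
  have h1 := hLI _ htV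
  have h2 : m + 1 ≤ rk (x + t • z) := by
    refine card_le_of_li (S := (Gl Q d K).map (LL (x + t • z) (x + t • z))) (fun j => ?_) h1
    refine Fin.cases ?_ (fun j => ?_) j
    · refine ⟨t⁻¹ • h, (Gl Q d K).smul_mem _ hh, ?_⟩
      change _ = LL z z h
      rw [map_smul, ← LD_apply, map_add, map_smul, LD_apply, LD_apply, h0, zero_add,
        smul_smul, inv_mul_cancel₀ ht, one_smul]
    · exact ⟨b j, hbG j, rfl⟩
  have := hx (x + t • z)
  omega

end Semi2

end QuiverData

open Finset

/-! ### Part V: primitive idempotents and an exchange lemma -/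

section Idem

variable {K A : Type*} [Field K] [Ring A] [Algebra K A]

/-- `f` is a primitive idempotent. -/
def PrimIdem (f : A) : Prop :=
  f ≠ 0 ∧ f * f = f ∧ ∀ e : A, e * e = e → f * e = e → e * f = e → e = 0 ∨ e = f

variable (K) in
lemma prim_dichotomy [FiniteDimensional K A] {f : A} (hf : PrimIdem f) {a : A} (hfa : f * a = a)
    (haf : a * f = a) : IsNilpotent a ∨ ∃ u, u * a = f := by
  obtain ⟨p, hp, hpa⟩ : ∃ p : Polynomial K, p ≠ 0 ∧ Polynomial.aeval a p = 0 :=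
    ⟨minpoly K a, minpoly.ne_zero (IsIntegral.of_finite K a), minpoly.aeval K a⟩
  obtain ⟨q, hq, hdvd⟩ := Polynomial.exists_eq_pow_rootMultiplicity_mul_and_not_dvd p hp 0
  set n := Polynomial.rootMultiplicity 0 p
  rw [map_zero, sub_zero] at hq hdvd
  have hcop : IsCoprime (Polynomial.X ^ (n + 1)) q :=
    ((Polynomial.irreducible_X.coprime_iff_not_dvd).2 hdvd).pow_left
  obtain ⟨g, h, hgh⟩ := hcop
  set G := Polynomial.aeval a g with hG
  set H := Polynomial.aeval a h with hH
  set q' := Polynomial.aeval a q with hq'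
  have e1 : G * a ^ (n + 1) + H * q' = 1 := by
    have := congrArg (Polynomial.aeval a) hgh
    simpa using this
  have e2 : a ^ (n + 1) * q' = 0 := by
    have := congrArg (Polynomial.aeval a) hq
    rw [hpa, map_mul, map_pow, Polynomial.aeval_X] at this
    rw [pow_succ', mul_assoc, ← this, mul_zero]
  have cG : a * G = G * a := by
    have h1 := congrArg (Polynomial.aeval a) (mul_comm Polynomial.X g)
    simpa using h1
  have cH : a * H = H * a := by
    have h1 := congrArg (Polynomial.aeval a) (mul_comm Polynomial.X h)
    simpa using h1
  have cHp : a ^ (n + 1) * H = H * a ^ (n + 1) := (Commute.pow_left (show Commute a H from cH) _)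
  have cGp : a ^ (n + 1) * G = G * a ^ (n + 1) := (Commute.pow_left (show Commute a G from cG) _)
  have e3 : a ^ (n + 1) * (H * q') = 0 := by
    rw [← mul_assoc, cHp, mul_assoc, e2, mul_zero]
  set ε := G * a ^ (n + 1) with hε
  have hε1 : ε * ε = ε := by
    have h1 : ε * (ε + H * q') = ε := by rw [e1, mul_one]
    rw [mul_add] at h1
    have h2 : ε * (H * q') = 0 := by rw [hε, mul_assoc, e3, mul_zero]
    rwa [h2, add_zero] at h1
  have hε2 : f * ε = ε := by
    rw [← cGp, pow_succ', mul_assoc, ← mul_assoc f, hfa]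
  have hε3 : ε * f = ε := by
    rw [hε, pow_succ, mul_assoc, mul_assoc, haf]
  rcases hf.2.2 ε hε1 hε2 hε3 with h0 | h0
  · left
    refine ⟨n + 1, ?_⟩
    have : a ^ (n + 1) * (ε + H * q') = a ^ (n + 1) := by rw [e1, mul_one]
    rw [mul_add, e3, h0, mul_zero, add_zero] at this
    exact this.symm
  · right
    refine ⟨G * a ^ n, ?_⟩
    rw [mul_assoc, ← pow_succ, ← hε, h0]

variable (K) in
lemma prim_sum [FiniteDimensional K A] {f : A} (hf : PrimIdem f) {κ : Type*} (c : κ → A)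
    (J : Finset κ) : (∃ u, u * (∑ k ∈ J, c k) * f = f) → ∃ k ∈ J, ∃ u, u * c k * f = f := by
  classical
  induction J using Finset.induction_on with
  | empty =>
    rintro ⟨u, hu⟩
    exact absurd (by simpa using hu.symm) hf.1
  | insert k₀ J hk ih =>
    rintro ⟨u, hu⟩
    rw [Finset.sum_insert hk, mul_add, add_mul] at hu
    have h1 : f * (f * u * c k₀ * f) = f * u * c k₀ * f := by
      simp only [← mul_assoc, hf.2.1]
    have h2 : (f * u * c k₀ * f) * f = f * u * c k₀ * f := by
      simp only [mul_assoc, hf.2.1]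
    rcases prim_dichotomy K hf h1 h2 with ⟨n, hn⟩ | ⟨v, hv⟩
    · set a := f * u * c k₀ * f with ha
      have h3 : f * u * (∑ k ∈ J, c k) * f = (1 - a) * f := by
        have := congrArg (fun w => f * w) hu
        simp only [mul_add, ← mul_assoc, hf.2.1] at this
        rw [sub_mul, one_mul, h2, ha]
        exact eq_sub_of_add_eq' this
      have h4 : (∑ i ∈ Finset.range n, a ^ i) * (1 - a) = 1 := by
        rw [geom_sum_mul_neg, hn, sub_zero]
      obtain ⟨k, hkJ, w, hw⟩ := ih ⟨(∑ i ∈ Finset.range n, a ^ i) * f * u, by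
        rw [mul_assoc, mul_assoc, mul_assoc, ← mul_assoc u, ← mul_assoc f, ← mul_assoc f, h3,
          ← mul_assoc, h4, one_mul]⟩
      exact ⟨k, Finset.mem_insert_of_mem hkJ, w, hw⟩
    · refine ⟨k₀, Finset.mem_insert_self _ _, v * f * u, ?_⟩
      simp only [mul_assoc] at hv ⊢
      exact hv

variable (K) in
theorem exchange [FiniteDimensional K A] {κ : Type*} : ∀ (s : ℕ) (f : Fin s → A),
    (∀ r, PrimIdem (f r)) → (∀ r t, r ≠ t → f r * f t = 0) →
    ∀ (J : Finset κ) (e : κ → A), (∀ k ∈ J, e k ≠ 0) → (∀ k ∈ J, e k * e k = e k) →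
    (∀ k ∈ J, ∀ l ∈ J, k ≠ l → e k * e l = 0) →
    (∀ k ∈ J, (∑ r, f r) * e k = e k) → (∀ k ∈ J, e k * (∑ r, f r) = e k) → J.card ≤ s := by
  classical
  intro s
  induction s with
  | zero =>
    intro f _ _ J e h0 _ _ hF _
    rcases J.eq_empty_or_nonempty with rfl | ⟨k, hk⟩
    · simp
    · exact absurd (by simpa using (hF k hk).symm) (h0 k hk)
  | succ s ih =>
    intro f hprim horth J e h0 hid ho hF hF'
    set F := ∑ r, f r with hFdef
    have hFs : F = f 0 + ∑ r : Fin s, f r.succ := Fin.sum_univ_succ f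
    set F' := ∑ r : Fin s, f r.succ with hF'def
    set φ := f 0 with hφ
    have hφφ : φ * φ = φ := (hprim 0).2.1
    have hφF' : φ * F' = 0 := by
      rw [hF'def, Finset.mul_sum]
      exact Finset.sum_eq_zero fun r _ => horth _ _ (Fin.succ_ne_zero r).symm
    have hF'φ : F' * φ = 0 := by
      rw [hF'def, Finset.sum_mul]
      exact Finset.sum_eq_zero fun r _ => horth _ _ (Fin.succ_ne_zero r)
    have hF'F' : F' * F' = F' := by
      rw [hF'def, Finset.sum_mul]
      refine Finset.sum_congr rfl fun r _ => ?_
      rw [Finset.mul_sum, Finset.sum_eq_single r]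
      · exact (hprim _).2.1
      · intro t _ ht
        exact horth _ _ fun h => ht (Fin.succ_injective _ h).symm
      · simp
    have hFF : F * F = F := by
      rw [hFs, add_mul, mul_add, mul_add, hφφ, hφF', hF'φ, hF'F', add_zero, zero_add]
    have hφF : φ * F = φ := by rw [hFs, mul_add, hφφ, hφF', add_zero]
    have hFφ : F * φ = φ := by rw [hFs, add_mul, hφφ, hF'φ, add_zero]
    have hFF' : F * F' = F' := by rw [hFs, add_mul, hφF', hF'F', zero_add]
    have hF'F : F' * F = F' := by rw [hFs, mul_add, hF'φ, hF'F', zero_add]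
    -- the step
    have step : ∀ (J' : Finset κ) (c : A), J' ⊆ J → c * F = c →
        (∀ k ∈ J', c * e k = 0) → (∀ k ∈ J', e k * c = 0) → (∃ u, u * c * φ = φ) →
        J'.card ≤ s := by
      rintro J' c hJ' hcF hce hec ⟨u, hu⟩
      set w := φ * u * c with hw
      have hwφ : w * φ = φ := by rw [hw, mul_assoc, mul_assoc, ← mul_assoc u, hu, hφφ]
      have hwF : w * F = w := by rw [hw, mul_assoc, hcF]
      have hwe : ∀ k ∈ J', w * e k = 0 := fun k hk => by rw [hw, mul_assoc, hce k hk, mul_zero]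
      have hkey : (F - w) * F' = F - w := by
        have : F' = F - φ := by rw [hFs]; abel
        rw [this, sub_mul, mul_sub, mul_sub, hFF, hwF, hFφ, hwφ]
        abel
      have hFe : ∀ k ∈ J', (F - w) * e k = e k := fun k hk => by
        rw [sub_mul, hwe k hk, sub_zero, hF k (hJ' hk)]
      have hmid : ∀ k ∈ J', ∀ l ∈ J', (F' * e k * (F - w)) * (F' * e l * (F - w)) =
          F' * (e k * e l) * (F - w) := by
        intro k _ l hl
        calc (F' * e k * (F - w)) * (F' * e l * (F - w))
            = F' * e k * (((F - w) * F') * e l) * (F - w) := by simp only [mul_assoc]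
          _ = _ := by rw [hkey, hFe l hl]; simp only [mul_assoc]
      refine ih (fun r => f r.succ) (fun r => hprim _)
        (fun r t hrt => horth _ _ fun h => hrt (Fin.succ_injective _ h)) J'
        (fun k => F' * e k * (F - w)) ?_ ?_ ?_ ?_ ?_
      · intro k hk hzero
        apply h0 k (hJ' hk)
        have h1 := congrArg (fun y => (F - w) * y * e k) hzero
        simp only [mul_zero, zero_mul] at h1
        calc e k = e k * e k := (hid k (hJ' hk)).symm
          _ = ((F - w) * e k) * ((F - w) * e k) := by rw [hFe k hk]
          _ = (((F - w) * F') * e k) * ((F - w) * e k) := by rw [hkey]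
          _ = (F - w) * (F' * e k * (F - w)) * e k := by simp only [mul_assoc]
          _ = 0 := h1
      · intro k hk
        simp only [hmid k hk k hk, hid k (hJ' hk)]
      · intro k hk l hl hkl
        simp only [hmid k hk l hl, ho k (hJ' hk) l (hJ' hl) hkl, mul_zero, zero_mul]
      · intro k hk
        change F' * (F' * e k * (F - w)) = _
        rw [← mul_assoc, ← mul_assoc, hF'F']
      · intro k hk
        change (F' * e k * (F - w)) * F' = _
        rw [mul_assoc, hkey]
    let c : Option κ → A := fun o => o.elim (F - ∑ k ∈ J, e k) e
    have hsum : ∑ o ∈ Finset.insertNone J, c o = F := by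
      rw [Finset.sum_insertNone]
      simp [c]
    obtain ⟨o, ho', u, hu⟩ := prim_sum K (hprim 0) c (Finset.insertNone J)
      ⟨1, by rw [hsum, one_mul]; exact hFφ⟩
    have hsumk : ∀ k ∈ J, (∑ l ∈ J, e l) * e k = e k := by
      intro k hk
      rw [Finset.sum_mul, Finset.sum_eq_single k]
      · exact hid k hk
      · intro l hl hlk; exact ho l hl k hk hlk
      · intro h; exact absurd hk h
    have hksum : ∀ k ∈ J, e k * (∑ l ∈ J, e l) = e k := by
      intro k hk
      rw [Finset.mul_sum, Finset.sum_eq_single k]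
      · exact hid k hk
      · intro l hl hlk; exact ho k hk l hl hlk.symm
      · intro h; exact absurd hk h
    cases o with
    | none =>
      have h1 := step J (F - ∑ k ∈ J, e k) (fun _ h => h) ?_ ?_ ?_ ⟨u, hu⟩
      · omega
      · rw [sub_mul, hFF, Finset.sum_mul]
        congr 1
        exact Finset.sum_congr rfl fun k hk => hF' k hk
      · intro k hk
        rw [sub_mul, hF k hk, hsumk k hk, sub_self]
      · intro k hk
        rw [mul_sub, hF' k hk, hksum k hk, sub_self]
    | some j =>
      have hj : j ∈ J := by simpa using ho'
      have h1 := step (J.erase j) (e j) (Finset.erase_subset _ _) (hF' j hj) ?_ ?_ ⟨u, hu⟩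
      · rw [Finset.card_erase_of_mem hj] at h1
        omega
      · intro k hk
        exact ho j hj k (Finset.mem_of_mem_erase hk) (Finset.ne_of_mem_erase hk).symm
      · intro k hk
        exact ho k (Finset.mem_of_mem_erase hk) j hj (Finset.ne_of_mem_erase hk)

end Idem

open Finset

/-! ### Part VI: endomorphism algebras and idempotents of a decomposition -/

section Abs

variable {K V : Type*} [Field K] [AddCommGroup V] [Module K V]

lemma ext_of_iSup {s : ℕ} {N : Fin s → Submodule K V} (h : (⨆ r, N r) = ⊤)
    {S T : Module.End K V} (hST : ∀ t, ∀ v ∈ N t, S v = T v) : S = T := by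
  have h1 : (⨆ r, N r) ≤ LinearMap.eqLocus S T := iSup_le fun t v hv => hST t v hv
  rw [h] at h1
  apply LinearMap.ext
  intro v
  exact h1 (Submodule.mem_top)

lemma exists_projections {s : ℕ} {N : Fin s → Submodule K V}
    (hdis : ∀ r, Disjoint (N r) (⨆ t, ⨆ (_ : t ≠ r), N t)) (htop : (⨆ r, N r) = ⊤) :
    ∃ f : Fin s → Module.End K V, (∀ r v, f r v ∈ N r) ∧ (∀ r, ∀ v ∈ N r, f r v = v) ∧
      (∀ r t, t ≠ r → ∀ v ∈ N t, f r v = 0) := by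
  have hc : ∀ r, IsCompl (N r) (⨆ t, ⨆ (_ : t ≠ r), N t) := by
    intro r
    refine ⟨hdis r, ?_⟩
    rw [codisjoint_iff_le_sup, ← htop]
    refine iSup_le fun t => ?_
    by_cases h : t = r
    · subst h; exact le_sup_left
    · exact le_sup_of_le_right (le_iSup₂_of_le t h le_rfl)
  have hex : ∀ r, ∃ g : Module.End K V, (∀ v, g v ∈ N r) ∧ (∀ v ∈ N r, g v = v) ∧
      (∀ v ∈ (⨆ t, ⨆ (_ : t ≠ r), N t), g v = 0) := by
    intro r
    refine ⟨(N r).subtype ∘ₗ Submodule.projectionOnto _ _ (hc r), fun v => ?_, fun v hv => ?_,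
      fun v hv => ?_⟩
    · exact (Submodule.projectionOnto _ _ (hc r) v).2
    · have := Submodule.projectionOnto_apply_left (hc r) ⟨v, hv⟩
      exact congrArg Subtype.val this
    · have := (Submodule.projectionOnto_apply_eq_zero_iff (hc r) (x := v)).2 hv
      exact congrArg Subtype.val this
  choose f h1 h2 h3 using hex
  refine ⟨f, h1, h2, fun r t htr v hv => h3 r v ?_⟩
  exact (le_iSup₂_of_le (f := fun t (_ : t ≠ r) => N t) t htr le_rfl) hv

lemma exists_genInverse (φ : Module.End K V) : ∃ ψ : Module.End K V, φ * ψ * φ = φ := by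
  obtain ⟨g, hg⟩ := LinearMap.exists_rightInverse_of_surjective φ.rangeRestrict
    (LinearMap.range_rangeRestrict φ)
  obtain ⟨ψ, hψ⟩ := LinearMap.exists_extend g
  refine ⟨ψ, ?_⟩
  apply LinearMap.ext
  intro v
  have h1 : ψ (φ v) = g (φ.rangeRestrict v) :=
    congrArg (fun k => k (φ.rangeRestrict v)) hψ
  have h2 := congrArg (fun k => k (φ.rangeRestrict v)) hg
  have h3 := congrArg Subtype.val h2
  change φ (ψ (φ v)) = φ v
  rw [h1]
  exact h3

end Abs

namespace QuiverData

section EndAlg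

variable {Q : QuiverData} {d : Fin Q.n → ℕ} {K : Type} [Field K]

/-- endomorphism algebra of the representation `x` -/
noncomputable def Ax (x : RepSpace Q d K) : Subalgebra K (EE Q d K) :=
  Subalgebra.centralizer K (Set.range (pr Q d K) ∪ Set.range (ar Q d K x))

lemma mem_Ax {x : RepSpace Q d K} {g : EE Q d K} :
    g ∈ Ax x ↔ g ∈ Gl Q d K ∧ ∀ a, g * ar Q d K x a = ar Q d K x a * g := by
  rw [Ax, Subalgebra.mem_centralizer_iff]
  constructor
  · intro h
    exact ⟨fun i => (h _ (Or.inl ⟨i, rfl⟩)).symm, fun a => (h _ (Or.inr ⟨a, rfl⟩)).symm⟩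
  · rintro ⟨h1, h2⟩ _ (⟨i, rfl⟩ | ⟨a, rfl⟩)
    · exact (h1 i).symm
    · exact (h2 a).symm

lemma mem_Ax' {x : RepSpace Q d K} {g : EE Q d K} :
    g ∈ Ax x ↔ g ∈ Gl Q d K ∧ LL x x g = 0 := by
  rw [mem_Ax]
  refine and_congr_right fun _ => ?_
  constructor
  · intro h; funext a; rw [LL_apply, h a, sub_self]; rfl
  · intro h a
    have := congrFun h a
    rwa [LL_apply, Pi.zero_apply, sub_eq_zero] at this

/-- complete system of primitive orthogonal idempotents of `x` with dimension vectors `D` -/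
structure IdemSys (x : RepSpace Q d K) (s : ℕ) (D : Fin s → Fin Q.n → ℕ)
    (f : Fin s → EE Q d K) : Prop where
  mem : ∀ r, f r ∈ Ax x
  sum : ∑ r, f r = 1
  orth : ∀ r t, r ≠ t → f r * f t = 0
  idem : ∀ r, f r * f r = f r
  ne : ∀ r, f r ≠ 0
  prim : ∀ r, ∀ e ∈ Ax x, e * e = e → f r * e = e → e * f r = e → e = 0 ∨ e = f r
  dim : ∀ r i, Module.finrank K (LinearMap.range (pr Q d K i * f r)) = D r i

lemma stable_range {x : RepSpace Q d K} {e : EE Q d K} (he : e ∈ Ax x) :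
    Stable Q d K x (LinearMap.range e) := by
  obtain ⟨h1, h2⟩ := mem_Ax.1 he
  constructor
  · rintro a _ ⟨_, ⟨v, rfl⟩, rfl⟩
    exact ⟨ar Q d K x a v, congrArg (fun k => k v) (h2 a)⟩
  · rintro a _ ⟨_, ⟨v, rfl⟩, rfl⟩
    exact ⟨pr Q d K a v, congrArg (fun k => k v) (h1 a)⟩

lemma exists_idemSys {x : RepSpace Q d K} {s : ℕ} {D : Fin s → Fin Q.n → ℕ}
    (h : DecompWith Q d K x s D) : ∃ f, IdemSys x s D f := by
  obtain ⟨N, hst, hdis, htop, hind, hdim⟩ := h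
  obtain ⟨f, h1, h2, h3⟩ := exists_projections hdis htop
  have hcomm : ∀ r (T : EE Q d K), (∀ t, (N t).map T ≤ N t) → f r * T = T * f r := by
    intro r T hT
    refine ext_of_iSup htop fun t v hv => ?_
    have hTv : T v ∈ N t := hT t ⟨v, hv, rfl⟩
    rw [Module.End.mul_apply, Module.End.mul_apply]
    by_cases htr : t = r
    · subst htr; rw [h2 t _ hTv, h2 t v hv]
    · rw [h3 r t htr _ hTv, h3 r t htr v hv, map_zero]
  have hidem : ∀ r, f r * f r = f r := fun r => by
    apply LinearMap.ext; intro v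
    exact h2 r _ (h1 r v)
  have hrange : ∀ r, LinearMap.range (f r) = N r := by
    intro r
    apply le_antisymm
    · rintro _ ⟨v, rfl⟩; exact h1 r v
    · intro v hv; exact ⟨v, h2 r v hv⟩
  have hmem : ∀ r, f r ∈ Ax x := fun r => mem_Ax.2
      ⟨fun i => hcomm r _ fun t => (hst t).2 i, fun a => hcomm r _ fun t => (hst t).1 a⟩
  refine ⟨f, hmem, ?_, ?_, hidem, ?_, ?_, ?_⟩
  · refine ext_of_iSup htop fun t v hv => ?_
    rw [LinearMap.sum_apply, Finset.sum_eq_single t]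
    · rw [h2 t v hv]; rfl
    · intro r _ hr; exact h3 r t hr.symm v hv
    · simp
  · intro r t hrt
    apply LinearMap.ext; intro v
    exact h3 r t hrt.symm _ (h1 t v)
  · intro r h0
    apply (hind r).1
    rw [← hrange r, h0, LinearMap.range_zero]
  · intro r e he hee hfe hef
    have hfe' : f r - e ∈ Ax x := Subalgebra.sub_mem _ (hmem r) he
    have hz : e * (f r - e) = 0 := by rw [mul_sub, hef, hee, sub_self]
    have key := (hind r).2 (LinearMap.range e) (LinearMap.range (f r - e)) (stable_range he)
      (stable_range hfe') ?_ ?_ ?_ ?_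
    · rcases key with h | h
      · left; exact LinearMap.range_eq_bot.1 h
      · right; exact (sub_eq_zero.1 (LinearMap.range_eq_bot.1 h)).symm
    · rw [← hrange r]
      rintro _ ⟨v, rfl⟩
      exact ⟨e v, congrArg (fun k => k v) hfe⟩
    · rw [← hrange r]
      rintro _ ⟨v, rfl⟩
      refine ⟨(f r - e) v, ?_⟩
      have : f r * (f r - e) = f r - e := by rw [mul_sub, hfe, hidem]
      exact congrArg (fun k => k v) this
    · rw [← hrange r]
      apply le_antisymm
      · apply sup_le
        · rintro _ ⟨v, rfl⟩
          exact ⟨e v, congrArg (fun k => k v) hfe⟩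
        · rintro _ ⟨v, rfl⟩
          refine ⟨(f r - e) v, ?_⟩
          have : f r * (f r - e) = f r - e := by rw [mul_sub, hfe, hidem]
          exact congrArg (fun k => k v) this
      · rintro _ ⟨v, rfl⟩
        have : f r v = e v + (f r - e) v := by simp
        rw [this]
        exact Submodule.add_mem_sup ⟨v, rfl⟩ ⟨v, rfl⟩
    · rw [eq_bot_iff]
      rintro _ ⟨⟨v, rfl⟩, ⟨w, hw⟩⟩
      rw [Submodule.mem_bot]
      have a1 : e (e v) = e v := congrArg (fun k => k v) hee
      have a2 : e ((f r - e) w) = 0 := congrArg (fun k => k w) hz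
      rw [hw, a1] at a2
      exact a2
  · intro r i
    rw [← hdim r i, vdim, ← hrange r]
    have : LinearMap.range (pr Q d K i * f r) = (LinearMap.range (f r)).map (proj Q d K i) :=
      LinearMap.range_comp _ _
    rw [this]

lemma IdemSys.primIdem {x : RepSpace Q d K} {s : ℕ} {D : Fin s → Fin Q.n → ℕ}
    {f : Fin s → EE Q d K} (h : IdemSys x s D f) (r : Fin s) :
    PrimIdem (⟨f r, h.mem r⟩ : Ax x) := by
  refine ⟨fun h0 => h.ne r (congrArg Subtype.val h0), Subtype.ext (h.idem r), ?_⟩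
  rintro ⟨e, he⟩ h1 h2 h3
  rcases h.prim r e he (congrArg Subtype.val h1) (congrArg Subtype.val h2)
    (congrArg Subtype.val h3) with h | h
  · left; exact Subtype.ext h
  · right; exact Subtype.ext h

lemma IdemSys.card_le {x : RepSpace Q d K} {s : ℕ} {D : Fin s → Fin Q.n → ℕ}
    {f : Fin s → EE Q d K} (h : IdemSys x s D f) {κ : Type} [Fintype κ] {e : κ → EE Q d K}
    (hm : ∀ k, e k ∈ Ax x) (h0 : ∀ k, e k ≠ 0) (hid : ∀ k, e k * e k = e k)
    (ho : ∀ k l, k ≠ l → e k * e l = 0) : Fintype.card κ ≤ s := by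
  have hsum : (∑ r, (⟨f r, h.mem r⟩ : Ax x)) = 1 := by
    apply Subtype.ext
    rw [AddSubmonoidClass.coe_finsetSum]
    exact h.sum
  refine exchange K (A := Ax x) s (fun r => ⟨f r, h.mem r⟩) h.primIdem
    (fun r t hrt => Subtype.ext (h.orth r t hrt)) (Finset.univ : Finset κ) (fun k => ⟨e k, hm k⟩)
    ?_ ?_ ?_ ?_ ?_
  · intro k _ hk; exact h0 k (congrArg Subtype.val hk)
  · intro k _; exact Subtype.ext (hid k)
  · intro k _ l _ hkl; exact Subtype.ext (ho k l hkl)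
  · intro k _; rw [hsum, one_mul]
  · intro k _; rw [hsum, mul_one]

end EndAlg

end QuiverData

open Finset

/-! ### Part VII: generic summands are bricks -/

section SqZero

variable {K A : Type*} [Field K] [IsAlgClosed K] [Ring A] [Algebra K A] [FiniteDimensional K A]

variable (K) in
lemma exists_sqZero {f : A} (hf : PrimIdem f) {a : A} (hfa : f * a = a) (haf : a * f = a)
    (hne : ∀ c : K, a ≠ c • f) : ∃ φ : A, φ ≠ 0 ∧ φ * φ = 0 ∧ f * φ = φ ∧ φ * f = φ := by
  let S : Submodule K A := LinearMap.eqLocus (LinearMap.mulLeft K f) LinearMap.id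
  have hS : ∀ y, y ∈ S ↔ f * y = y := fun y => Iff.rfl
  let T : Module.End K S := (LinearMap.mulLeft K a).restrict (p := S) (q := S) (by
    intro y hy
    rw [hS]
    change f * (a * y) = a * y
    rw [← mul_assoc, hfa])
  have hnt : Nontrivial S := ⟨⟨⟨f, hf.2.1⟩, 0, fun h => hf.1 (congrArg Subtype.val h)⟩⟩
  obtain ⟨c, hc⟩ := Module.End.exists_eigenvalue T
  obtain ⟨⟨y, hy⟩, hy1⟩ := hc.exists_hasEigenvector
  have hy0 : y ≠ 0 := fun h => hy1.2 (Subtype.ext h)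
  have hya : a * y = c • y := congrArg Subtype.val hy1.apply_eq_smul
  have hfy : f * y = y := hy
  set b := a - c • f with hb
  have hb0 : b ≠ 0 := fun h => hne c (sub_eq_zero.1 h)
  have hfb : f * b = b := by rw [hb, mul_sub, hfa, mul_smul_comm, hf.2.1]
  have hbf : b * f = b := by rw [hb, sub_mul, haf, smul_mul_assoc, hf.2.1]
  have hby : b * y = 0 := by rw [hb, sub_mul, hya, smul_mul_assoc, hfy, sub_self]
  rcases prim_dichotomy K hf hfb hbf with ⟨n, hn⟩ | ⟨u, hu⟩
  · classical
    have hex : ∃ n, b ^ (n + 1) = 0 := ⟨n, by rw [pow_succ, hn, zero_mul]⟩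
    set k := Nat.find hex with hk
    have h1 : b ^ (k + 1) = 0 := Nat.find_spec hex
    have hk0 : k ≠ 0 := by
      intro h
      rw [h] at h1
      exact hb0 (by simpa using h1)
    obtain ⟨l, hl⟩ := Nat.exists_eq_succ_of_ne_zero hk0
    refine ⟨b ^ k, ?_, ?_, ?_, ?_⟩
    · intro h
      have := Nat.find_min hex (m := l) (by omega)
      apply this
      rw [← Nat.succ_eq_add_one, ← hl, h]
    · rw [← pow_add]
      have : k + k = (k + 1) + l := by omega
      rw [this, pow_add, h1, zero_mul]
    · rw [hl, Nat.succ_eq_add_one, pow_succ', ← mul_assoc, hfb]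
    · rw [hl, Nat.succ_eq_add_one, pow_succ, mul_assoc, hbf]
  · exfalso
    apply hy0
    rw [← hfy, ← hu, mul_assoc, hby, mul_zero]

end SqZero

namespace QuiverData

section Brick

attribute [local instance] zariskiTopology

variable {Q : QuiverData} {d : Fin Q.n → ℕ} {K : Type} [Field K]

lemma exists_psi {x : RepSpace Q d K} {f φ : EE Q d K} (hf : f ∈ Ax x) (hφ : φ ∈ Ax x)
    (hff : f * f = f) (hfφ : f * φ = φ) (hφf : φ * f = φ) (hsq : φ * φ = 0) :
    ∃ ψ ∈ Gl Q d K, φ * ψ * φ = φ ∧ ψ * ψ * φ = 0 ∧ f * ψ = ψ ∧ ψ * f = ψ := by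
  obtain ⟨ψ₀, hψ₀⟩ := exists_genInverse φ
  have hφG := (mem_Ax.1 hφ).1
  have hfG := (mem_Ax.1 hf).1
  set ψ₁ := ∑ i, pr Q d K i * ψ₀ * pr Q d K i with hψ₁
  have hψ₁G : ψ₁ ∈ Gl Q d K := by
    intro i
    rw [hψ₁, Finset.sum_mul, Finset.mul_sum]
    refine Finset.sum_congr rfl fun j _ => ?_
    by_cases hij : j = i
    · subst hij
      rw [mul_assoc, pr_mul_self, ← mul_assoc, ← mul_assoc, pr_mul_self]
    · rw [mul_assoc, pr_mul_ne hij, ← mul_assoc, ← mul_assoc, pr_mul_ne (Ne.symm hij)]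
      simp
  have h1 : φ * ψ₁ * φ = φ := by
    rw [hψ₁, Finset.mul_sum, Finset.sum_mul]
    calc ∑ i, φ * (pr Q d K i * ψ₀ * pr Q d K i) * φ
        = ∑ i, φ * pr Q d K i := by
          refine Finset.sum_congr rfl fun i _ => ?_
          calc φ * (pr Q d K i * ψ₀ * pr Q d K i) * φ
              = (φ * pr Q d K i) * ψ₀ * (pr Q d K i * φ) := by simp only [mul_assoc]
            _ = pr Q d K i * (φ * ψ₀ * φ) * pr Q d K i := by
                rw [← hφG i]; rw [hφG i]; simp only [mul_assoc]; rw [hφG i]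
            _ = φ * pr Q d K i := by rw [hψ₀, ← hφG i, mul_assoc, pr_mul_self]
      _ = φ := by rw [← Finset.mul_sum, sum_pr, mul_one]
  set ψ₂ := f * ψ₁ * f with hψ₂
  have hψ₂G : ψ₂ ∈ Gl Q d K := mul_mem_Gl (mul_mem_Gl hfG hψ₁G) hfG
  have h2 : φ * ψ₂ * φ = φ := by
    calc φ * ψ₂ * φ = (φ * f) * ψ₁ * (f * φ) := by rw [hψ₂]; simp only [mul_assoc]
      _ = φ := by rw [hfφ, hφf, h1]
  have h3 : f * ψ₂ = ψ₂ := by rw [hψ₂, ← mul_assoc, ← mul_assoc, hff]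
  have h4 : ψ₂ * f = ψ₂ := by rw [hψ₂, mul_assoc, hff]
  clear_value ψ₂
  refine ⟨ψ₂ * (1 - ψ₂ * φ), ?_, ?_, ?_, ?_, ?_⟩
  · exact mul_mem_Gl hψ₂G ((Gl Q d K).sub_mem one_mem_Gl (mul_mem_Gl hψ₂G hφG))
  · have : (1 - ψ₂ * φ) * φ = φ := by rw [sub_mul, one_mul, mul_assoc, hsq, mul_zero, sub_zero]
    rw [mul_assoc, mul_assoc, this, ← mul_assoc, h2]
  · have e1 : (1 - ψ₂ * φ) * φ = φ := by rw [sub_mul, one_mul, mul_assoc, hsq, mul_zero, sub_zero]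
    have e2 : (1 - ψ₂ * φ) * (ψ₂ * φ) = 0 := by
      rw [sub_mul, one_mul, mul_assoc, ← mul_assoc φ, h2, sub_self]
    rw [mul_assoc, mul_assoc ψ₂ _ φ, e1, mul_assoc, e2, mul_zero]
  · rw [← mul_assoc, h3]
  · rw [mul_assoc, sub_mul, one_mul, mul_assoc, hφf, mul_sub, mul_sub, h4, mul_one]

lemma deform {R : Type*} [Ring R] {X φ ψ : R}
    (hX : X * φ = φ * X) (h1 : φ * ψ * φ = φ) (h2 : ψ * ψ * φ = 0) :
    (X - (1 - ψ * φ) * X * ψ) * (φ + ψ * φ) = (φ + ψ * φ) * (X - (1 - ψ * φ) * X * ψ) := by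
  have e1 : φ * (1 - ψ * φ) = 0 := by rw [mul_sub, mul_one, ← mul_assoc, h1, sub_self]
  have e2 : (φ + ψ * φ) * (X - (1 - ψ * φ) * X * ψ) = (φ + ψ * φ) * X := by
    have : (φ + ψ * φ) * ((1 - ψ * φ) * X * ψ) = 0 := by
      have : (φ + ψ * φ) * (1 - ψ * φ) = 0 := by rw [add_mul, mul_assoc, e1, mul_zero, add_zero]
      rw [mul_assoc, ← mul_assoc, this, zero_mul]
    rw [mul_sub, this, sub_zero]
  have e3 : ψ * φ * X * (ψ * φ) = ψ * φ * X := by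
    calc ψ * φ * X * (ψ * φ) = ψ * (φ * X) * ψ * φ := by simp only [mul_assoc]
      _ = ψ * X * (φ * ψ * φ) := by rw [← hX]; simp only [mul_assoc]
      _ = ψ * φ * X := by rw [h1, mul_assoc, hX, mul_assoc]
  have e4 : ψ * (φ + ψ * φ) = ψ * φ := by rw [mul_add, ← mul_assoc ψ ψ, h2, add_zero]
  rw [e2, sub_mul, mul_assoc, e4, sub_mul, one_mul, sub_mul, e3, mul_add, add_mul, hX]
  abel

lemma deform_idem {R : Type*} [Ring R] {φ ψ : R}
    (hsq : φ * φ = 0) (h1 : φ * ψ * φ = φ) :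
    (φ + ψ * φ) * (φ + ψ * φ) = φ + ψ * φ := by
  rw [add_mul, mul_add, mul_add, hsq, ← mul_assoc, h1, zero_add, mul_assoc ψ φ φ, hsq, mul_zero,
    zero_add, mul_assoc ψ φ, ← mul_assoc φ ψ φ, h1]

lemma ar_add_smul (x z : RepSpace Q d K) (t : K) (a) :
    ar Q d K (x + t • z) a = ar Q d K x a + t • ar Q d K z a := by
  have h1 := congrFun (map_add (arL Q d K) x (t • z)) a
  rw [map_smul] at h1
  exact h1

theorem brick [IsAlgClosed K] {U : Set (RepSpace Q d K)} (hU : IsOpen U) {s : ℕ}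
    {D : Fin s → Fin Q.n → ℕ} (hUD : ∀ x ∈ U, DecompWith Q d K x s D)
    {x : RepSpace Q d K} (hx : x ∈ U) {f : Fin s → EE Q d K} (hf : IdemSys x s D f) (r : Fin s)
    {a : EE Q d K} (ha : a ∈ Ax x) (hfa : f r * a = a) (haf : a * f r = a) :
    ∃ c : K, a = c • f r := by
  classical
  by_contra hcon
  push Not at hcon
  have : Infinite K := IsAlgClosed.instInfinite
  obtain ⟨⟨φ, hφ⟩, hφ0, hsq, hfφ, hφf⟩ := exists_sqZero K (hf.primIdem r) (a := ⟨a, ha⟩)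
    (Subtype.ext hfa) (Subtype.ext haf) (fun c h => hcon c (congrArg Subtype.val h))
  replace hφ0 : φ ≠ 0 := fun h => hφ0 (Subtype.ext h)
  replace hsq : φ * φ = 0 := congrArg Subtype.val hsq
  replace hfφ : f r * φ = φ := congrArg Subtype.val hfφ
  replace hφf : φ * f r = φ := congrArg Subtype.val hφf
  obtain ⟨ψ, hψG, h1, h2, h3, h4⟩ := exists_psi (hf.mem r) hφ (hf.idem r) hfφ hφf hsq
  obtain ⟨hφG, hφX⟩ := mem_Ax.1 hφ
  have hpG : (1 : EE Q d K) - ψ * φ ∈ Gl Q d K :=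
    (Gl Q d K).sub_mem one_mem_Gl (mul_mem_Gl hψG hφG)
  have hzRp0 : (fun b => (1 - ψ * φ) * ar Q d K x b * ψ) ∈ Rp Q d K := by
    intro b
    calc pr Q d K (Q.tgt b) * ((1 - ψ * φ) * ar Q d K x b * ψ) * pr Q d K (Q.src b)
        = (pr Q d K (Q.tgt b) * (1 - ψ * φ)) * ar Q d K x b * (ψ * pr Q d K (Q.src b)) := by
          simp only [mul_assoc]
      _ = (1 - ψ * φ) * (pr Q d K (Q.tgt b) * (ar Q d K x b * pr Q d K (Q.src b))) * ψ := by
          rw [← hpG, hψG]; simp only [mul_assoc]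
      _ = _ := by rw [ar_mul_pr, pr_mul_ar]
  have hzRp : (fun b => - ((1 - ψ * φ) * ar Q d K x b * ψ)) ∈ Rp Q d K :=
    (Rp Q d K).neg_mem hzRp0
  obtain ⟨t, ht, hxt⟩ := line_mem hU hx
    (ofOp Q d K (fun b => - ((1 - ψ * φ) * ar Q d K x b * ψ)))
  set y := x + t • (ofOp Q d K (fun b => - ((1 - ψ * φ) * ar Q d K x b * ψ))) with hy
  have hyar : ∀ b, ar Q d K y b = ar Q d K x b - (1 - ψ * φ) * ar Q d K x b * (t • ψ) := by
    intro b
    have e1 : ar Q d K (ofOp Q d K (fun b => - ((1 - ψ * φ) * ar Q d K x b * ψ))) b =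
        - ((1 - ψ * φ) * ar Q d K x b * ψ) := congrFun (arL_ofOp hzRp) b
    rw [hy, ar_add_smul, e1, smul_neg, ← sub_eq_add_neg, mul_smul_comm]
  set φ' := t⁻¹ • φ with hφ'
  set ψ' := t • ψ with hψ'
  have hp' : ψ' * φ' = ψ * φ := by
    rw [hφ', hψ', smul_mul_smul_comm, mul_inv_cancel₀ ht, one_smul]
  have h1' : φ' * ψ' * φ' = φ' := by
    rw [mul_assoc, hp', hφ', smul_mul_assoc, ← mul_assoc, h1]
  have h2' : ψ' * ψ' * φ' = 0 := by
    rw [mul_assoc, hp', hψ', smul_mul_assoc, ← mul_assoc, h2, smul_zero]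
  have hsq' : φ' * φ' = 0 := by rw [hφ', smul_mul_smul_comm, hsq, smul_zero]
  set ε := φ' + ψ' * φ' with hε
  have hεid : ε * ε = ε := deform_idem hsq' h1'
  have hfε : f r * ε = ε := by
    rw [hε, hp', mul_add, ← mul_assoc, h3, hφ', mul_smul_comm, hfφ]
  have hεf : ε * f r = ε := by
    rw [hε, hp', add_mul, mul_assoc, hφf, hφ', smul_mul_assoc, hφf]
  have hφ'0 : φ' ≠ 0 := by
    rw [hφ']; exact smul_ne_zero (inv_ne_zero ht) hφ0
  have hφε : φ' * ε = φ' := by rw [hε, mul_add, hsq', zero_add, ← mul_assoc, h1']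
  have hεφ : ε * φ' = 0 := by rw [hε, add_mul, hsq', zero_add, mul_assoc, hsq', mul_zero]
  have hε0 : ε ≠ 0 := by
    intro h
    rw [h, mul_zero] at hφε
    exact hφ'0 hφε.symm
  have hεne : f r - ε ≠ 0 := by
    intro h
    rw [sub_eq_zero] at h
    rw [← h, hφ', mul_smul_comm, hfφ] at hεφ
    exact hφ'0 hεφ
  have hεA : ε ∈ Ax y := by
    refine mem_Ax.2 ⟨?_, fun b => ?_⟩
    · rw [hε, hp']
      exact (Gl Q d K).add_mem ((Gl Q d K).smul_mem _ hφG) (mul_mem_Gl hψG hφG)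
    · rw [hyar b, ← hp']
      refine (deform ?_ h1' h2').symm
      rw [hφ', mul_smul_comm, smul_mul_assoc, hφX b]
  have hfψ : ∀ q, q ≠ r → f q * ψ = 0 := fun q hq => by
    rw [← h3, ← mul_assoc, hf.orth q r hq, zero_mul]
  have hψf : ∀ q, q ≠ r → ψ * f q = 0 := fun q hq => by
    rw [← h4, mul_assoc, hf.orth r q hq.symm, mul_zero]
  have hfφ0 : ∀ q, q ≠ r → f q * φ = 0 := fun q hq => by
    rw [← hfφ, ← mul_assoc, hf.orth q r hq, zero_mul]
  have hφf0 : ∀ q, q ≠ r → φ * f q = 0 := fun q hq => by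
    rw [← hφf, mul_assoc, hf.orth r q hq.symm, mul_zero]
  have hcψ : ∀ q, f q * ψ = ψ * f q := fun q => by
    by_cases hq : q = r
    · subst hq; rw [h3, h4]
    · rw [hfψ q hq, hψf q hq]
  have hcφ : ∀ q, f q * φ = φ * f q := fun q => by
    by_cases hq : q = r
    · subst hq; rw [hfφ, hφf]
    · rw [hfφ0 q hq, hφf0 q hq]
  have hfA : ∀ q, f q ∈ Ax y := by
    intro q
    obtain ⟨g1, g2⟩ := mem_Ax.1 (hf.mem q)
    refine mem_Ax.2 ⟨g1, fun b => ?_⟩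
    have c1 : Commute (f q) (ar Q d K x b) := g2 b
    have c2 : Commute (f q) ψ := hcψ q
    have c3 : Commute (f q) φ := hcφ q
    rw [hyar b]
    exact c1.sub_right ((((Commute.one_right _).sub_right (c2.mul_right c3)).mul_right c1).mul_right
      (c2.smul_right t))
  obtain ⟨g, hg⟩ := exists_idemSys (hUD y hxt)
  have hfε0 : ∀ q, q ≠ r → f q * ε = 0 := fun q hq => by
    rw [← hfε, ← mul_assoc, hf.orth q r hq, zero_mul]
  have hεf0 : ∀ q, q ≠ r → ε * f q = 0 := fun q hq => by
    rw [← hεf, mul_assoc, hf.orth r q hq.symm, mul_zero]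
  let e : Option (Fin s) → EE Q d K := fun o => o.elim (f r - ε) (fun q => if q = r then ε else f q)
  have hcard := hg.card_le (e := e) ?_ ?_ ?_ ?_
  · rw [Fintype.card_option, Fintype.card_fin] at hcard
    omega
  · rintro (_ | q)
    · exact Subalgebra.sub_mem _ (hfA r) hεA
    · change (if q = r then ε else f q) ∈ _
      split_ifs
      · exact hεA
      · exact hfA q
  · rintro (_ | q)
    · exact hεne
    · change (if q = r then ε else f q) ≠ _
      split_ifs
      · exact hε0
      · exact hf.ne q
  · rintro (_ | q)
    · change (f r - ε) * (f r - ε) = f r - ε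
      rw [sub_mul, mul_sub, mul_sub, hf.idem, hfε, hεf, hεid, sub_self, sub_zero]
    · change (if q = r then ε else f q) * (if q = r then ε else f q) = (if q = r then ε else f q)
      split_ifs
      · exact hεid
      · exact hf.idem q
  · rintro (_ | q) (_ | q') hne
    · exact absurd rfl hne
    · change (f r - ε) * (if q' = r then ε else f q') = 0
      split_ifs with hq
      · rw [sub_mul, hfε, hεid, sub_self]
      · rw [sub_mul, hf.orth r q' (Ne.symm hq), hεf0 q' hq, sub_self]
    · change (if q = r then ε else f q) * (f r - ε) = 0
      split_ifs with hq
      · rw [mul_sub, hεf, hεid, sub_self]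
      · rw [mul_sub, hf.orth q r hq, hfε0 q hq, sub_self]
    · change (if q = r then ε else f q) * (if q' = r then ε else f q') = 0
      have hqq : q ≠ q' := fun h => hne (congrArg some h)
      split_ifs with ha hb hb
      · exact absurd (ha.trans hb.symm) hqq
      · exact hεf0 q' hb
      · exact hfε0 q ha
      · exact hf.orth q q' hqq

end Brick

end QuiverData

open Finset

/-! ### Part VIII: the dimension count -/

section AbsCount

variable {K : Type*} [Field K]

lemma finrank_map_ker {M N : Type*} [AddCommGroup M] [Module K M] [AddCommGroup N] [Module K N]
    [FiniteDimensional K M] (T : M →ₗ[K] N) (W : Submodule K M) :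
    Module.finrank K W = Module.finrank K (W.map T) +
      Module.finrank K (W ⊓ LinearMap.ker T : Submodule K M) := by
  have h := LinearMap.finrank_range_add_finrank_ker (T.domRestrict W)
  rw [LinearMap.range_domRestrict, LinearMap.ker_domRestrict] at h
  rw [← h]
  congr 1
  have e : ((LinearMap.ker T).comap W.subtype).map W.subtype = W ⊓ LinearMap.ker T := by
    rw [Submodule.map_comap_subtype]
  rw [← e]
  exact ((Submodule.equivMapOfInjective W.subtype W.injective_subtype _).finrank_eq)

/-- operators with `P z P' = z` -/
def corner {V : Type*} [AddCommGroup V] [Module K V] (P P' : Module.End K V) :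
    Submodule K (Module.End K V) where
  carrier := {z | P * z * P' = z}
  add_mem' := by
    intro a b ha hb
    simp only [Set.mem_ofPred_eq] at ha hb ⊢
    rw [mul_add, add_mul, ha, hb]
  zero_mem' := by simp
  smul_mem' := by
    intro c a ha
    simp only [Set.mem_ofPred_eq] at ha ⊢
    rw [mul_smul_comm, smul_mul_assoc, ha]

lemma finrank_corner {V : Type*} [AddCommGroup V] [Module K V] [FiniteDimensional K V]
    {P P' : Module.End K V} (hP : P * P = P) (hP' : P' * P' = P') :
    Module.finrank K (corner P P') =
      Module.finrank K (LinearMap.range P) * Module.finrank K (LinearMap.range P') := by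
  have hPa : ∀ v ∈ LinearMap.range P, P v = v := by
    rintro _ ⟨v, rfl⟩; exact congrArg (fun k => k v) hP
  have hPa' : ∀ v ∈ LinearMap.range P', P' v = v := by
    rintro _ ⟨v, rfl⟩; exact congrArg (fun k => k v) hP'
  let e : corner P P' ≃ₗ[K] (LinearMap.range P' →ₗ[K] LinearMap.range P) :=
    { toFun := fun z => P.rangeRestrict ∘ₗ z.1 ∘ₗ (LinearMap.range P').subtype
      map_add' := fun z w => by ext v; simp
      map_smul' := fun c z => by ext v; simp
      invFun := fun g => ⟨(LinearMap.range P).subtype ∘ₗ g ∘ₗ P'.rangeRestrict, by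
        change P * _ * P' = _
        apply LinearMap.ext; intro v
        change P (g (P'.rangeRestrict (P' v))).1 = (g (P'.rangeRestrict v)).1
        rw [hPa _ (g _).2]
        congr 2
        exact Subtype.ext (hPa' _ ⟨v, rfl⟩)⟩
      left_inv := fun z => by
        apply Subtype.ext
        apply LinearMap.ext; intro v
        exact congrArg (fun k => k v) z.2
      right_inv := fun g => by
        apply LinearMap.ext; intro v
        apply Subtype.ext
        change P (g (P'.rangeRestrict v.1)).1 = (g v).1
        rw [hPa _ (g _).2]
        congr 2
        exact Subtype.ext (hPa' _ v.2) }
  rw [e.finrank_eq, Module.finrank_linearMap, mul_comm]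

lemma finrank_eq_sum {M E κ : Type*} [AddCommGroup M] [Module K M] [AddCommGroup E] [Module K E]
    [FiniteDimensional K E] [Fintype κ] [DecidableEq κ] (W : Submodule K M)
    (S : κ → Submodule K E) (p : κ → M →ₗ[K] E) (q : κ → E →ₗ[K] M)
    (h1 : ∀ w ∈ W, ∀ k, p k w ∈ S k) (h2 : ∀ w ∈ W, ∑ k, q k (p k w) = w)
    (h3 : ∀ k, ∀ z ∈ S k, q k z ∈ W)
    (h4 : ∀ k l, ∀ z ∈ S k, p l (q k z) = if k = l then z else 0) :
    Module.finrank K W = ∑ k, Module.finrank K (S k) := by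
  let e : W ≃ₗ[K] (∀ k, S k) :=
    { toFun := fun w k => ⟨p k w.1, h1 w.1 w.2 k⟩
      map_add' := fun w w' => by funext k; apply Subtype.ext; simp
      map_smul' := fun c w => by funext k; apply Subtype.ext; simp
      invFun := fun z => ⟨∑ k, q k (z k).1, W.sum_mem fun k _ => h3 k _ (z k).2⟩
      left_inv := fun w => Subtype.ext (h2 w.1 w.2)
      right_inv := fun z => by
        funext l
        apply Subtype.ext
        change p l (∑ k, q k (z k).1) = (z l).1
        rw [map_sum, Finset.sum_congr rfl (fun k _ => h4 k l _ (z k).2)]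
        simp }
  rw [e.finrank_eq, Module.finrank_pi_fintype]

end AbsCount

namespace QuiverData

section Count

variable {Q : QuiverData} {d : Fin Q.n → ℕ} {K : Type} [Field K]

/-- graded endomorphisms commuting with the idempotents -/
def DG {s : ℕ} (f : Fin s → EE Q d K) : Submodule K (EE Q d K) where
  carrier := {g | g ∈ Gl Q d K ∧ ∀ r, f r * g = g * f r}
  add_mem' := by
    rintro a b ⟨ha, ha'⟩ ⟨hb, hb'⟩
    exact ⟨add_mem ha hb, fun r => by rw [mul_add, add_mul, ha', hb']⟩
  zero_mem' := ⟨zero_mem _, fun r => by rw [mul_zero, zero_mul]⟩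
  smul_mem' := by
    rintro c a ⟨ha, ha'⟩
    exact ⟨Submodule.smul_mem _ c ha, fun r => by rw [mul_smul_comm, smul_mul_assoc, ha']⟩

/-- graded families commuting with the idempotents -/
def DR {s : ℕ} (f : Fin s → EE Q d K) : Submodule K (Fin Q.numArrows → EE Q d K) where
  carrier := {z | z ∈ Rp Q d K ∧ ∀ r a, f r * z a = z a * f r}
  add_mem' := by
    rintro a b ⟨ha, ha'⟩ ⟨hb, hb'⟩
    exact ⟨add_mem ha hb, fun r t => by
      rw [Pi.add_apply, mul_add, add_mul, ha', hb']⟩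
  zero_mem' := ⟨zero_mem _, fun r a => by rw [Pi.zero_apply, mul_zero, zero_mul]⟩
  smul_mem' := by
    rintro c a ⟨ha, ha'⟩
    exact ⟨Submodule.smul_mem _ c ha, fun r t => by
      rw [Pi.smul_apply, mul_smul_comm, smul_mul_assoc, ha']⟩

/-- diagonal part -/
noncomputable def dE {s : ℕ} (f : Fin s → EE Q d K) : EE Q d K →ₗ[K] EE Q d K :=
  ∑ r, LinearMap.mulLeft K (f r) ∘ₗ LinearMap.mulRight K (f r)

lemma dE_apply {s : ℕ} (f : Fin s → EE Q d K) (g : EE Q d K) :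
    dE f g = ∑ r, f r * (g * f r) := by
  simp [dE, LinearMap.sum_apply]

/-- diagonal part of families -/
noncomputable def dR {s : ℕ} (f : Fin s → EE Q d K) :
    (Fin Q.numArrows → EE Q d K) →ₗ[K] (Fin Q.numArrows → EE Q d K) :=
  LinearMap.pi fun a => dE f ∘ₗ LinearMap.proj a

lemma dR_apply {s : ℕ} (f : Fin s → EE Q d K) (z : Fin Q.numArrows → EE Q d K) (a) :
    dR f z a = dE f (z a) := rfl

section Sys

variable {x : RepSpace Q d K} {s : ℕ} {D : Fin s → Fin Q.n → ℕ} {f : Fin s → EE Q d K}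

lemma IdemSys.gl (hf : IdemSys x s D f) (r i) : f r * pr Q d K i = pr Q d K i * f r :=
  (mem_Ax.1 (hf.mem r)).1 i

lemma IdemSys.orth_ite (hf : IdemSys x s D f) (r t) : f r * f t = if r = t then f t else 0 := by
  split_ifs with h
  · subst h; exact hf.idem r
  · exact hf.orth r t h

lemma pr_mul_ite (i j : Fin Q.n) : pr Q d K i * pr Q d K j = if i = j then pr Q d K j else 0 := by
  split_ifs with h
  · subst h; exact pr_mul_self i
  · exact pr_mul_ne h

lemma IdemSys.mul_dE (hf : IdemSys x s D f) (g : EE Q d K) (t) :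
    f t * dE f g = f t * (g * f t) := by
  rw [dE_apply, Finset.mul_sum, Finset.sum_eq_single t]
  · rw [← mul_assoc, hf.idem]
  · intro r _ hr
    rw [← mul_assoc, hf.orth t r hr.symm, zero_mul]
  · simp

lemma IdemSys.dE_mul (hf : IdemSys x s D f) (g : EE Q d K) (t) :
    dE f g * f t = f t * (g * f t) := by
  rw [dE_apply, Finset.sum_mul, Finset.sum_eq_single t]
  · rw [mul_assoc, mul_assoc, hf.idem]
  · intro r _ hr
    rw [mul_assoc, mul_assoc, hf.orth r t hr, mul_zero, mul_zero]
  · simp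

lemma IdemSys.dE_fix (hf : IdemSys x s D f) {g : EE Q d K} (hg : ∀ r, f r * g = g * f r) :
    dE f g = g := by
  rw [dE_apply]
  have : ∀ r, f r * (g * f r) = f r * g := fun r => by
    rw [← hg, ← mul_assoc, hf.idem]
  simp only [this]
  rw [← Finset.sum_mul, hf.sum, one_mul]

lemma IdemSys.dE_mem (hf : IdemSys x s D f) {g : EE Q d K} (hg : g ∈ Gl Q d K) :
    dE f g ∈ DG f := by
  refine ⟨?_, fun r => by rw [hf.mul_dE, hf.dE_mul]⟩
  rw [dE_apply]
  exact Submodule.sum_mem _ fun r _ =>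
    mul_mem_Gl (mem_Ax.1 (hf.mem r)).1 (mul_mem_Gl hg (mem_Ax.1 (hf.mem r)).1)

lemma mul_mem_Rp {g h : EE Q d K} (hg : g ∈ Gl Q d K) (hh : h ∈ Gl Q d K)
    {z : Fin Q.numArrows → EE Q d K} (hz : z ∈ Rp Q d K) : (fun a => g * (z a * h)) ∈ Rp Q d K := by
  intro a
  calc pr Q d K (Q.tgt a) * (g * (z a * h)) * pr Q d K (Q.src a)
      = (pr Q d K (Q.tgt a) * g) * z a * (h * pr Q d K (Q.src a)) := by simp only [mul_assoc]
    _ = g * ((pr Q d K (Q.tgt a) * z a * pr Q d K (Q.src a)) * h) := by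
        rw [← hg, hh]; simp only [mul_assoc]
    _ = _ := by rw [hz a]

lemma IdemSys.dR_mem (hf : IdemSys x s D f) {z : Fin Q.numArrows → EE Q d K}
    (hz : z ∈ Rp Q d K) : dR f z ∈ DR f := by
  refine ⟨?_, fun r a => by rw [dR_apply, hf.mul_dE, hf.dE_mul]⟩
  have : dR f z = ∑ r, (fun a => f r * (z a * f r)) := by
    funext a
    rw [dR_apply, dE_apply, Finset.sum_apply]
  rw [this]
  exact Submodule.sum_mem _ fun r _ =>
    mul_mem_Rp (mem_Ax.1 (hf.mem r)).1 (mem_Ax.1 (hf.mem r)).1 hz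

lemma IdemSys.map_dR (hf : IdemSys x s D f) : (Rp Q d K).map (dR f) = DR f := by
  apply le_antisymm
  · rintro _ ⟨z, hz, rfl⟩
    exact hf.dR_mem hz
  · rintro z ⟨hz, hz'⟩
    refine ⟨z, hz, ?_⟩
    funext a
    exact hf.dE_fix fun r => hz' r a

lemma IdemSys.dR_LL (hf : IdemSys x s D f) (g : EE Q d K) :
    dR f (LL x x g) = LL x x (dE f g) := by
  funext a
  rw [dR_apply, LL_apply, LL_apply, map_sub]
  have hX : ∀ r, f r * ar Q d K x a = ar Q d K x a * f r := fun r => (mem_Ax.1 (hf.mem r)).2 a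
  congr 1
  · rw [dE_apply, dE_apply, Finset.sum_mul]
    refine Finset.sum_congr rfl fun r _ => ?_
    rw [mul_assoc, mul_assoc, mul_assoc, hX]
  · rw [dE_apply, dE_apply, Finset.mul_sum]
    refine Finset.sum_congr rfl fun r _ => ?_
    rw [← mul_assoc, ← mul_assoc, hX, mul_assoc, mul_assoc]

lemma IdemSys.map_map (hf : IdemSys x s D f) :
    ((Gl Q d K).map (LL x x)).map (dR f) = (DG f).map (LL x x) := by
  apply le_antisymm
  · rintro _ ⟨_, ⟨g, hg, rfl⟩, rfl⟩
    rw [hf.dR_LL]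
    exact ⟨_, hf.dE_mem hg, rfl⟩
  · rintro _ ⟨g, ⟨hg, hg'⟩, rfl⟩
    refine ⟨_, ⟨g, hg, rfl⟩, ?_⟩
    rw [hf.dR_LL, hf.dE_fix hg']

lemma IdemSys.ker_eq [Infinite K] (hf : IdemSys x s D f)
    (hx : ∀ y : RepSpace Q d K, rk y ≤ rk x) :
    (Gl Q d K).map (LL x x) ⊓ LinearMap.ker (dR f) = Rp Q d K ⊓ LinearMap.ker (dR f) := by
  apply le_antisymm
  · refine inf_le_inf_right _ ?_
    rintro _ ⟨g, hg, rfl⟩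
    exact LL_mem_Rp x x hg
  · rintro z ⟨hz, hz0⟩
    refine ⟨?_, hz0⟩
    have hG : ∀ r, f r ∈ Gl Q d K := fun r => (mem_Ax.1 (hf.mem r)).1
    have key : ∀ r t, r ≠ t → (fun a => f r * (z a * f t)) ∈ (Gl Q d K).map (LL x x) := by
      intro r t hrt
      have hm : (fun a => (1 : EE Q d K) * (z a * f t)) ∈ Rp Q d K :=
        mul_mem_Rp one_mem_Gl (hG t) hz
      have h := first_order hx (ofOp Q d K (fun a => (1 : EE Q d K) * (z a * f t))) (hG r)
        (mem_Ax'.1 (hf.mem r)).2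
      have e : LL (ofOp Q d K (fun a => (1 : EE Q d K) * (z a * f t)))
          (ofOp Q d K (fun a => (1 : EE Q d K) * (z a * f t))) (f r) =
          (fun a => f r * (z a * f t)) := by
        funext a
        have ea : ar Q d K (ofOp Q d K (fun a => (1 : EE Q d K) * (z a * f t))) a =
          (1 : EE Q d K) * (z a * f t) := congrFun (arL_ofOp hm) a
        rw [LL_apply, ea, one_mul, mul_assoc (z a), hf.orth t r hrt.symm, mul_zero, sub_zero]
      rw [← e]
      exact h
    have hz1 : z = ∑ r, ∑ t, (if r = t then 0 else (fun a => f r * (z a * f t))) := by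
      funext a
      have e0 : ∑ r, f r * (z a * f r) = 0 := by
        rw [← dE_apply]
        exact congrFun hz0 a
      have e1 : z a = ∑ r, ∑ t, f r * (z a * f t) := by
        have : ∀ r, ∑ t, f r * (z a * f t) = f r * z a := fun r => by
          rw [← Finset.mul_sum, ← Finset.mul_sum, hf.sum, mul_one]
        simp only [this]
        rw [← Finset.sum_mul, hf.sum, one_mul]
      have e2 : ∀ r t, f r * (z a * f t) =
          (if r = t then (0 : Fin Q.numArrows → EE Q d K)
            else (fun a => f r * (z a * f t))) a + (if r = t then f r * (z a * f r) else 0) := by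
        intro r t
        split_ifs with h
        · subst h; rw [Pi.zero_apply, zero_add]
        · rw [add_zero]
      rw [Finset.sum_apply]
      simp only [Finset.sum_apply]
      refine e1.trans ?_
      refine Eq.trans ?_ (add_zero _)
      rw [← e0, ← Finset.sum_add_distrib]
      refine Finset.sum_congr rfl fun r _ => ?_
      rw [Finset.sum_congr rfl (fun t _ => e2 r t), Finset.sum_add_distrib]
      congr 1
      simp
    rw [hz1]
    refine Submodule.sum_mem _ fun r _ => Submodule.sum_mem _ fun t _ => ?_
    split_ifs with h
    · exact zero_mem _
    · exact key r t h

lemma IdemSys.linInd (hf : IdemSys x s D f) : LinearIndependent K f := by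
  rw [Fintype.linearIndependent_iff]
  intro c hc t
  have h : f t * ∑ r, c r • f r = c t • f t := by
    rw [Finset.mul_sum, Finset.sum_eq_single t]
    · rw [mul_smul_comm, hf.idem]
    · intro r _ hr
      rw [mul_smul_comm, hf.orth t r hr.symm, smul_zero]
    · simp
  rw [hc, mul_zero] at h
  exact (smul_eq_zero.1 h.symm).resolve_right (hf.ne t)

lemma IdemSys.finrank_ker [IsAlgClosed K] {U : Set (RepSpace Q d K)} (hU : IsOpen U)
    (hUD : ∀ x ∈ U, DecompWith Q d K x s D) (hxU : x ∈ U) (hf : IdemSys x s D f) :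
    Module.finrank K (DG f ⊓ LinearMap.ker (LL x x) : Submodule K (EE Q d K)) = s := by
  have : DG f ⊓ LinearMap.ker (LL x x) = Submodule.span K (Set.range f) := by
    apply le_antisymm
    · rintro g ⟨⟨hg, hg'⟩, hg0⟩
      have hgA : g ∈ Ax x := mem_Ax'.2 ⟨hg, hg0⟩
      have : g = ∑ r, f r * g := by rw [← Finset.sum_mul, hf.sum, one_mul]
      rw [this]
      refine Submodule.sum_mem _ fun r _ => ?_
      obtain ⟨c, hc⟩ := brick hU hUD hxU hf r (a := f r * g)
        (Subalgebra.mul_mem _ (hf.mem r) hgA) (by rw [← mul_assoc, hf.idem])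
        (by rw [mul_assoc, ← hg', ← mul_assoc, hf.idem])
      rw [hc]
      exact Submodule.smul_mem _ _ (Submodule.subset_span ⟨r, rfl⟩)
    · rw [Submodule.span_le]
      rintro _ ⟨r, rfl⟩
      obtain ⟨h1, h2⟩ := mem_Ax'.1 (hf.mem r)
      refine ⟨⟨h1, fun t => ?_⟩, h2⟩
      by_cases h : t = r
      · rw [h]
      · rw [hf.orth t r h, hf.orth r t (Ne.symm h)]
  rw [this, finrank_span_eq_card hf.linInd, Fintype.card_fin]

lemma IdemSys.pf_idem (hf : IdemSys x s D f) (r i) :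
    (pr Q d K i * f r) * (pr Q d K i * f r) = pr Q d K i * f r := by
  rw [mul_assoc, ← mul_assoc (f r), hf.gl, mul_assoc, hf.idem, ← mul_assoc, pr_mul_self]

lemma IdemSys.finrank_DG (hf : IdemSys x s D f) :
    Module.finrank K (DG f) = ∑ r, eulerHomPart Q (D r) (D r) := by
  classical
  have h := finrank_eq_sum (κ := Fin s × Fin Q.n) (DG f)
    (fun k => corner (pr Q d K k.2 * f k.1) (pr Q d K k.2 * f k.1))
    (fun k => LinearMap.mulLeft K (pr Q d K k.2 * f k.1)) (fun _ => LinearMap.id) ?_ ?_ ?_ ?_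
  · rw [h, Fintype.sum_prod_type]
    refine Finset.sum_congr rfl fun r _ => ?_
    unfold eulerHomPart
    refine Finset.sum_congr rfl fun i _ => ?_
    rw [finrank_corner (hf.pf_idem r i) (hf.pf_idem r i), hf.dim]
  · rintro g ⟨hg, hg'⟩ ⟨r, i⟩
    change pr Q d K i * f r * (pr Q d K i * f r * g) * (pr Q d K i * f r) = pr Q d K i * f r * g
    rw [← mul_assoc (pr Q d K i * f r) _ g, hf.pf_idem, mul_assoc]
    have : g * (pr Q d K i * f r) = pr Q d K i * f r * g := by
      rw [← mul_assoc, hg, mul_assoc, ← hg', mul_assoc]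
    rw [this, ← mul_assoc, hf.pf_idem]
  · rintro g ⟨hg, hg'⟩
    change ∑ k : Fin s × Fin Q.n, pr Q d K k.2 * f k.1 * g = g
    rw [← Finset.sum_mul, Fintype.sum_prod_type]
    have : ∀ r, ∑ i, pr Q d K i * f r = f r := fun r => by
      rw [← Finset.sum_mul, sum_pr, one_mul]
    simp only [this]
    rw [hf.sum, one_mul]
  · rintro ⟨r, i⟩ z hz
    replace hz : pr Q d K i * f r * z * (pr Q d K i * f r) = z := hz
    have hl : pr Q d K i * z = z := by
      rw [← hz]; simp only [← mul_assoc]; rw [pr_mul_self]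
    have hr : z * f r = z := by
      rw [← hz]; simp only [mul_assoc]; rw [hf.idem]
    have hl' : f r * z = z := by
      rw [← hz]; simp only [← mul_assoc]; rw [hf.gl, mul_assoc (pr Q d K i), hf.idem]
    have hr' : z * pr Q d K i = z := by
      rw [← hz]; simp only [mul_assoc]; rw [hf.gl, ← mul_assoc (pr Q d K i) (pr Q d K i), pr_mul_self]
    refine ⟨fun j => ?_, fun t => ?_⟩
    · change z * _ = _ * z
      by_cases h : j = i
      · rw [h, hl, hr']
      · rw [← hr', mul_assoc, pr_mul_ne (Ne.symm h), hr', mul_zero, ← hl, ← mul_assoc, pr_mul_ne h,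
          zero_mul]
    · change _ * z = z * _
      by_cases h : t = r
      · rw [h, hr, hl']
      · rw [← hr, mul_assoc z, hf.orth r t (Ne.symm h), mul_zero, hr, ← hl', ← mul_assoc,
          hf.orth t r h, zero_mul]
  · rintro ⟨r, i⟩ ⟨t, j⟩ z hz
    replace hz : pr Q d K i * f r * z * (pr Q d K i * f r) = z := hz
    have hl : pr Q d K i * z = z := by
      rw [← hz]; simp only [← mul_assoc]; rw [pr_mul_self]
    have hl' : f r * z = z := by
      rw [← hz]; simp only [← mul_assoc]; rw [hf.gl, mul_assoc (pr Q d K i), hf.idem]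
    change pr Q d K j * f t * z = _
    split_ifs with h
    · obtain ⟨rfl, rfl⟩ := Prod.mk.inj h
      rw [mul_assoc, hl', hl]
    · by_cases ht : r = t
      · have hi : j ≠ i := fun hi => h (by rw [ht, hi])
        rw [← ht, mul_assoc, hl', ← hl, ← mul_assoc, pr_mul_ne hi, zero_mul]
      · rw [← hl', mul_assoc, ← mul_assoc (f t), hf.orth t r (Ne.symm ht), zero_mul, mul_zero]

lemma IdemSys.finrank_DR (hf : IdemSys x s D f) :
    Module.finrank K (DR f) = ∑ r, eulerExtPart Q (D r) (D r) := by
  classical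
  have h := finrank_eq_sum (κ := Fin s × Fin Q.numArrows) (DR f)
    (fun k => corner (pr Q d K (Q.tgt k.2) * f k.1) (pr Q d K (Q.src k.2) * f k.1))
    (fun k => LinearMap.mulLeft K (f k.1) ∘ₗ LinearMap.proj k.2)
    (fun k => LinearMap.single K (fun _ => EE Q d K) k.2) ?_ ?_ ?_ ?_
  · rw [h, Fintype.sum_prod_type]
    refine Finset.sum_congr rfl fun r _ => ?_
    unfold eulerExtPart
    refine Finset.sum_congr rfl fun i _ => ?_
    rw [finrank_corner (hf.pf_idem r _) (hf.pf_idem r _), hf.dim, hf.dim, mul_comm]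
  · rintro z ⟨hz, hz'⟩ ⟨r, a⟩
    change pr Q d K (Q.tgt a) * f r * (f r * z a) * (pr Q d K (Q.src a) * f r) = f r * z a
    calc pr Q d K (Q.tgt a) * f r * (f r * z a) * (pr Q d K (Q.src a) * f r)
        = pr Q d K (Q.tgt a) * (f r * f r) * z a * (pr Q d K (Q.src a) * f r) := by
          simp only [mul_assoc]
      _ = f r * (pr Q d K (Q.tgt a) * z a * pr Q d K (Q.src a)) * f r := by
          rw [hf.idem, ← hf.gl]; simp only [mul_assoc]
      _ = f r * z a := by rw [hz, mul_assoc, ← hz', ← mul_assoc, hf.idem]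
  · rintro z ⟨hz, hz'⟩
    rw [Fintype.sum_prod_type]
    change ∑ r, ∑ a, Pi.single (M := fun _ => EE Q d K) a (f r * z a) = z
    have : ∀ r, ∑ a, Pi.single (M := fun _ => EE Q d K) a (f r * z a) = fun a => f r * z a :=
      fun r => Finset.univ_sum_single (fun a => f r * z a)
    simp only [this]
    funext a
    rw [Finset.sum_apply, ← Finset.sum_mul, hf.sum, one_mul]
  · rintro ⟨r, a⟩ z hz
    replace hz : pr Q d K (Q.tgt a) * f r * z * (pr Q d K (Q.src a) * f r) = z := hz
    have hl : pr Q d K (Q.tgt a) * z = z := by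
      rw [← hz]; simp only [← mul_assoc]; rw [pr_mul_self]
    have hr : z * f r = z := by
      rw [← hz]; simp only [mul_assoc]; rw [hf.idem]
    have hl' : f r * z = z := by
      rw [← hz]; simp only [← mul_assoc]; rw [hf.gl, mul_assoc (pr Q d K _), hf.idem]
    have hr' : z * pr Q d K (Q.src a) = z := by
      rw [← hz]; simp only [mul_assoc]; rw [hf.gl, ← mul_assoc (pr Q d K _) (pr Q d K _), pr_mul_self]
    change Pi.single (M := fun _ => EE Q d K) a z ∈ DR f
    refine ⟨fun b => ?_, fun t b => ?_⟩
    · by_cases h : b = a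
      · subst h
        rw [Pi.single_eq_same, hl, hr']
      · rw [Pi.single_eq_of_ne h, mul_zero, zero_mul]
    · by_cases h : b = a
      · subst h
        rw [Pi.single_eq_same]
        by_cases h : t = r
        · rw [h, hr, hl']
        · rw [← hr, mul_assoc z, hf.orth r t (Ne.symm h), mul_zero, hr, ← hl', ← mul_assoc,
            hf.orth t r h, zero_mul]
      · rw [Pi.single_eq_of_ne h, mul_zero, zero_mul]
  · rintro ⟨r, a⟩ ⟨t, b⟩ z hz
    replace hz : pr Q d K (Q.tgt a) * f r * z * (pr Q d K (Q.src a) * f r) = z := hz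
    have hl' : f r * z = z := by
      rw [← hz]; simp only [← mul_assoc]; rw [hf.gl, mul_assoc (pr Q d K _), hf.idem]
    change f t * Pi.single (M := fun _ => EE Q d K) a z b = _
    split_ifs with h
    · obtain ⟨rfl, rfl⟩ := Prod.mk.inj h
      rw [Pi.single_eq_same, hl']
    · by_cases hb : b = a
      · have ht : t ≠ r := fun ht => h (by rw [ht, hb])
        subst hb
        rw [Pi.single_eq_same, ← hl', ← mul_assoc, hf.orth t r ht, zero_mul]
      · rw [Pi.single_eq_of_ne hb, mul_zero]

/-- the dimension count at a generic point -/
theorem IdemSys.count [IsAlgClosed K] {U : Set (RepSpace Q d K)} (hU : IsOpen U)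
    (hUD : ∀ x ∈ U, DecompWith Q d K x s D) (hxU : x ∈ U) (hf : IdemSys x s D f)
    (hx : ∀ y : RepSpace Q d K, rk y ≤ rk x) :
    Fintype.card (Coords Q d) + ∑ r, eulerHomPart Q (D r) (D r) =
      rk x + (s + ∑ r, eulerExtPart Q (D r) (D r)) := by
  have : Infinite K := IsAlgClosed.instInfinite
  have h1 := finrank_map_ker (dR f) (Rp Q d K)
  have h2 := finrank_map_ker (dR f) ((Gl Q d K).map (LL x x))
  have h3 := finrank_map_ker (LL x x) (DG f)
  rw [hf.map_dR, hf.finrank_DR, finrank_Rp] at h1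
  rw [hf.map_map, hf.ker_eq hx] at h2
  rw [hf.finrank_ker hU hUD hxU, hf.finrank_DG] at h3
  change rk x = _ at h2
  omega

end Sys

end Count

end QuiverData

open Finset

/-! ### Part IX: assembly -/

namespace QuiverData

section Assembly

variable {Q : QuiverData} {d : Fin Q.n → ℕ} {K : Type} [Field K]

lemma orbit_dim_le [Infinite K] {m : ℕ} (hm : ∀ y : RepSpace Q d K, rk y ≤ m)
    (x : RepSpace Q d K) : topologicalKrullDim ↥(orbitSet Q d K x) ≤ (m : ℕ) := by
  apply dim_le_of_local
  rintro ⟨y, hy⟩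
  obtain ⟨Ω, hΩ, hyΩ, hdim, -, -⟩ := chart y
  rw [orbit_eq hy] at hdim
  refine ⟨Subtype.val ⁻¹' Ω, hΩ.preimage continuous_subtype_val, hyΩ, ?_⟩
  have hle : topologicalKrullDim ↥(Subtype.val ⁻¹' Ω : Set ↥(orbitSet Q d K x)) ≤
      topologicalKrullDim ↥(Ω ∩ orbitSet Q d K x) := by
    let j : ↥(Subtype.val ⁻¹' Ω : Set ↥(orbitSet Q d K x)) → ↥(Ω ∩ orbitSet Q d K x) :=
      fun z => ⟨z.1.1, z.2, z.1.2⟩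
    have hj : Topology.IsInducing j := by
      refine Topology.IsInducing.of_comp (g := Subtype.val) ?_ continuous_subtype_val ?_
      · exact (continuous_subtype_val.comp continuous_subtype_val).subtype_mk _
      · have h := (Topology.IsInducing.subtypeVal (t := orbitSet Q d K x)).comp
          (Topology.IsInducing.subtypeVal
            (t := (Subtype.val ⁻¹' Ω : Set ↥(orbitSet Q d K x))))
        exact h
    exact hj.topologicalKrullDim_le
  refine hle.trans ?_
  rw [hdim]
  exact_mod_cast hm y

lemma le_orbit_dim [Infinite K] (x : RepSpace Q d K) :
    ((rk x : ℕ) : WithBot ℕ∞) ≤ topologicalKrullDim ↥(orbitSet Q d K x) := by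
  obtain ⟨Ω, hΩ, hyΩ, hdim, -, -⟩ := chart x
  rw [← hdim]
  exact (Topology.IsEmbedding.inclusion (Set.inter_subset_right)).isInducing.topologicalKrullDim_le

lemma rk_le (x : RepSpace Q d K) : rk x ≤ Fintype.card (Coords Q d) := by
  rw [← finrank_Rp (K := K)]
  refine Submodule.finrank_mono ?_
  rintro _ ⟨g, hg, rfl⟩
  exact LL_mem_Rp x x hg

lemma dense_orbit_iff [Infinite K] (x : RepSpace Q d K) :
    Dense (orbitSet Q d K x) ↔ rk x = Fintype.card (Coords Q d) := by
  obtain ⟨Ω, hΩ, hxΩ, hdim, h1, h2⟩ := chart x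
  constructor
  · intro h
    rw [Set.inter_eq_left.2 (h1 h)] at hdim
    have h3 : topologicalKrullDim ↥Ω = (Fintype.card (Coords Q d) : ℕ) := zar_dim_open hΩ ⟨x, hxΩ⟩
    rw [h3] at hdim
    exact_mod_cast hdim.symm
  · intro h
    rw [dense_iff_inter_open]
    intro V hV hne
    obtain ⟨y, hy1, hy2⟩ := zar_inter_nonempty hV hΩ hne ⟨x, hxΩ⟩
    exact ⟨y, hy1, h2 h hy2⟩

end Assembly

end QuiverData

open QuiverData in
/-- Kac. Let `d = ∑ d^{(r)}` be the canonical decomposition of `d` for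
the acyclic quiver `Q`. Then the generic number of parameters
`μ(d) = dim Rep_d(KQ) − max_x dim GL(d)·x` equals `∑_r (1 − ⟨d^{(r)}, d^{(r)}⟩)`, stated
additively (writing the Euler form as `⟨e,e⟩ = eulerHomPart e e − eulerExtPart e e`):
`dim Rep_d(KQ) + ∑_r ⟨d^{(r)},d^{(r)}⟩⁻-part = (⨆_x dim orbit x) + s + ∑_r ext-part`.
In particular `Rep_d(KQ)` has a dense `GL(d)`-orbit iff `∑_r (1 − ⟨d^{(r)}, d^{(r)}⟩) = 0`. -/
theorem statement_7 (K : Type) [Field K] [IsAlgClosed K]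
    (Q : QuiverData) (hacyc : Acyclic Q)
    (d : Fin Q.n → ℕ) (s : ℕ) (D : Fin s → Fin Q.n → ℕ)
    (hsum : ∀ i, d i = ∑ r, D r i)
    (hcan : ∃ U : Set (RepSpace Q d K), IsOpen U ∧ Dense U ∧
      ∀ x ∈ U, DecompWith Q d K x s D) :
    (topologicalKrullDim (RepSpace Q d K) +
        ((∑ r, eulerHomPart Q (D r) (D r) : ℕ∞) : WithBot ℕ∞)
      = (⨆ x : RepSpace Q d K, topologicalKrullDim ↥(orbitSet Q d K x)) +
        (((s + ∑ r, eulerExtPart Q (D r) (D r) : ℕ) : ℕ∞) : WithBot ℕ∞)) ∧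
    ((∃ x : RepSpace Q d K, Dense (orbitSet Q d K x)) ↔
      s + ∑ r, eulerExtPart Q (D r) (D r) = ∑ r, eulerHomPart Q (D r) (D r)) := by
  have hinf : Infinite K := IsAlgClosed.instInfinite
  obtain ⟨U, hU, hUd, hUD⟩ := hcan
  obtain ⟨x, hxU, hmax⟩ := exists_rk_max hUd
  obtain ⟨f, hf⟩ := exists_idemSys (hUD x hxU)
  have hcount := hf.count hU hUD hxU hmax
  have hN : topologicalKrullDim (RepSpace Q d K) = (Fintype.card (Coords Q d) : ℕ) := zar_dim
  have hsup : (⨆ x : RepSpace Q d K, topologicalKrullDim ↥(orbitSet Q d K x)) = (rk x : ℕ) :=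
    le_antisymm (iSup_le fun y => orbit_dim_le hmax y)
      ((le_orbit_dim x).trans (le_iSup (fun y : RepSpace Q d K =>
        topologicalKrullDim ↥(orbitSet Q d K y)) x))
  constructor
  · rw [hN, hsup]
    exact_mod_cast hcount
  · constructor
    · rintro ⟨y, hy⟩
      rw [dense_orbit_iff] at hy
      have h1 := hmax y
      have h2 := rk_le x
      omega
    · intro h
      refine ⟨x, (dense_orbit_iff x).2 ?_⟩
      omega
end

section
/- Let Q be a finite quiver in which the lengths of all paths are bounded by L, let K be an algebraically closed field and d a dimension vector, and let S(d) = (S_0,…,S_L) be the generic radical layering of the modules in Rep_d(KQ), i.e., the minimal value of the upper semicontinuous map x ↦ S(M_x), attained on a dense open subset of Rep_d(KQ). Then the dimension vectors t^{(l)} = dim S_l satisfy the recursion t^{(0)} = sup{0, d − d·A} and t^{(l+1)} = sup{0, (d − Σ_{i≤l} t^{(i)}) − (d − Σ_{i≤l} t^{(i)})·A} for 0 ≤ l ≤ L−1, where the suprema are componentwise in Z^n and A is the adjacency matrix of Q. -/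
open Finset

namespace QuiverData

section Aux

/-- Enumeration of a finite set compatible with a decreasing chain of subsets. -/
theorem aux_enum {B : Type} [DecidableEq B] (N : ℕ) : ∀ (G : ℕ → Finset B), Antitone G →
    ∃ ν : B → ℕ, ∀ l ≤ N, (∀ b ∈ G l, ν b < (G l).card) ∧
      ∀ k < (G l).card, ∃ b ∈ G l, ν b = k := by
  have idx : ∀ s : Finset B, ∃ f : B → ℕ, (∀ b ∈ s, f b < s.card) ∧
      ∀ k < s.card, ∃ b ∈ s, f b = k := by
    intro s
    refine ⟨fun b => if h : b ∈ s then (s.equivFin ⟨b, h⟩ : ℕ) else 0, ?_, ?_⟩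
    · intro b hb
      simp [hb]
    · intro k hk
      refine ⟨(s.equivFin.symm ⟨k, hk⟩ : B), (s.equivFin.symm ⟨k, hk⟩).2, ?_⟩
      simp
  induction N with
  | zero =>
    intro G _
    obtain ⟨f, hf⟩ := idx (G 0)
    refine ⟨f, fun l hl => ?_⟩
    obtain rfl : l = 0 := by omega
    exact hf
  | succ N ih =>
    intro G hG
    obtain ⟨ν, hν⟩ := ih (fun l => G (l + 1)) (fun a b h => hG (by omega))
    obtain ⟨f, hf1, hf2⟩ := idx (G 0 \ G 1)
    have hsub : G 1 ⊆ G 0 := hG (by omega)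
    have hc : (G 0 \ G 1).card + (G 1).card = (G 0).card := Finset.card_sdiff_add_card_eq_card hsub
    refine ⟨fun b => if b ∈ G 1 then ν b else (G 1).card + f b, fun l hl => ?_⟩
    rcases l with _ | m
    · have h1 := hν 0 (by omega)
      simp only [zero_add] at h1
      constructor
      · intro b hb
        by_cases h : b ∈ G 1
        · have := h1.1 b h
          simp only [h, if_true]; omega
        · have := hf1 b (by simp [h, hb])
          simp only [h, if_false]; omega
      · intro k hk
        by_cases h : k < (G 1).card
        · obtain ⟨b, hb, e⟩ := h1.2 k h
          exact ⟨b, hsub hb, by simp [hb, e]⟩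
        · obtain ⟨b, hb, e⟩ := hf2 (k - (G 1).card) (by omega)
          rw [Finset.mem_sdiff] at hb
          refine ⟨b, hb.1, ?_⟩
          simp only [hb.2, if_false]; omega
    · have h1 := hν m (by omega)
      have hs : G (m + 1) ⊆ G 1 := hG (by omega)
      constructor
      · intro b hb
        simp only [hs hb, if_true]
        exact h1.1 b hb
      · intro k hk
        obtain ⟨b, hb, e⟩ := h1.2 k hk
        exact ⟨b, hb, by simp [hs hb, e]⟩

theorem aux_finrank_iSup_le {K V ι : Type} [Field K] [AddCommGroup V] [Module K V]
    [FiniteDimensional K V] (s : Finset ι) (p : ι → Submodule K V) :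
    Module.finrank K (⨆ a ∈ s, p a : Submodule K V) ≤ ∑ a ∈ s, Module.finrank K (p a) := by
  classical
  induction s using Finset.induction_on with
  | empty => simp
  | insert a s ha ih =>
    rw [Finset.iSup_insert, Finset.sum_insert ha]
    exact (Submodule.finrank_add_le_finrank_add_finrank (p a) (⨆ b ∈ s, p b)).trans
      (Nat.add_le_add_left ih _)

theorem aux_sum {L : ℕ} (f : Fin (L+1) → ℕ) (g : ℕ → ℕ) (h : ∀ j, f j = g j) (l : Fin (L+1)) :
    ∑ j ∈ Finset.univ.filter (fun j => j ≤ l), f j = ∑ m ∈ Finset.range ((l : ℕ) + 1), g m := by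
  refine Finset.sum_bij (fun j _ => (j : ℕ)) ?_ ?_ ?_ ?_
  · intro j hj
    simp only [Finset.mem_filter, Finset.mem_univ, true_and, Fin.le_def] at hj
    simp only [Finset.mem_range]; omega
  · intro a _ b _ e
    exact Fin.ext e
  · intro m hm
    simp only [Finset.mem_range] at hm
    have := l.2
    refine ⟨⟨m, by omega⟩, ?_, rfl⟩
    rw [Finset.mem_filter]
    exact ⟨Finset.mem_univ _, Nat.lt_succ_iff.mp hm⟩
  · intro j _
    exact h j

theorem aux_tele (v : ℕ → ℕ) (hv : ∀ m, v (m+1) ≤ v m) (l : ℕ) :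
    ∑ m ∈ Finset.range l, (v m - v (m+1)) + v l = v 0 := by
  induction l with
  | zero => simp
  | succ l ih =>
    rw [Finset.sum_range_succ]
    have := hv l
    omega

end Aux

/-- The generic dimension vectors of the radical powers. -/
def auxRho (Q : QuiverData) (d : Fin Q.n → ℕ) : ℕ → Fin Q.n → ℕ
  | 0 => d
  | (l+1) => fun i => min (auxRho Q d l i)
      (∑ a ∈ Finset.univ.filter (fun a => Q.tgt a = i), auxRho Q d l (Q.src a))

section Aux2

variable (Q : QuiverData) (d : Fin Q.n → ℕ)

theorem auxRho_succ_le (l : ℕ) (i : Fin Q.n) : auxRho Q d (l+1) i ≤ auxRho Q d l i :=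
  min_le_left _ _

theorem auxRho_anti (i : Fin Q.n) : Antitone (fun l => auxRho Q d l i) :=
  antitone_nat_of_succ_le (fun l => auxRho_succ_le Q d l i)

theorem auxRho_le (l : ℕ) (i : Fin Q.n) : auxRho Q d l i ≤ d i :=
  auxRho_anti Q d i (Nat.zero_le l)

theorem auxRho_succ (l : ℕ) (i : Fin Q.n) : auxRho Q d (l+1) i = min (d i)
      (∑ a ∈ Finset.univ.filter (fun a => Q.tgt a = i), auxRho Q d l (Q.src a)) := by
  induction l with
  | zero => rfl
  | succ l ih =>
    have h : ∑ a ∈ Finset.univ.filter (fun a => Q.tgt a = i), auxRho Q d (l+1) (Q.src a) ≤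
        ∑ a ∈ Finset.univ.filter (fun a => Q.tgt a = i), auxRho Q d l (Q.src a) :=
      Finset.sum_le_sum (fun a _ => auxRho_succ_le Q d l _)
    change min (auxRho Q d (l+1) i) _ = _
    rw [ih]
    omega

theorem cumLayer_eq (l : ℕ) : ∀ i, cumLayer Q (fun j => (d j : ℤ)) l i =
    (d i : ℤ) - auxRho Q d (l+1) i := by
  induction l with
  | zero =>
    intro i
    simp only [cumLayer, inflowZ, auxRho]
    push_cast
    omega
  | succ l ih =>
    intro i
    have e : (fun j => (d j : ℤ) - cumLayer Q (fun j => (d j : ℤ)) l j) =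
        fun j => (auxRho Q d (l+1) j : ℤ) := by
      funext j; rw [ih]; ring
    simp only [cumLayer]
    rw [e, ih, inflowZ]
    rw [show auxRho Q d (l+1+1) i = min (auxRho Q d (l+1) i)
      (∑ a ∈ Finset.univ.filter (fun a => Q.tgt a = i), auxRho Q d (l+1) (Q.src a)) from rfl]
    push_cast
    omega

variable (K : Type) [Field K]

theorem radPow_zero (x : RepSpace Q d K) : radPow Q d K x 0 = ⊤ := by
  rw [eq_top_iff, radPow]
  refine le_trans ?_ (le_iSup _ ⟨[], rfl⟩)
  simp [wordMap, Module.End.one_eq_id]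

theorem radPow_succ (x : RepSpace Q d K) (l : ℕ) : radPow Q d K x (l+1) =
    ⨆ a, (radPow Q d K x l).map (arrowMap Q d K x a) := by
  apply le_antisymm
  · refine iSup_le ?_
    rintro ⟨w, hw⟩
    rcases w with _ | ⟨a, w⟩
    · simp at hw
    · refine le_trans ?_ (le_iSup _ a)
      have h : wordMap Q d K x (a :: w) = arrowMap Q d K x a ∘ₗ wordMap Q d K x w := by
        simp [wordMap, Module.End.mul_eq_comp]
      rw [h, LinearMap.range_comp]
      apply Submodule.map_mono
      exact le_iSup (fun w : {w : List (Fin Q.numArrows) // w.length = l} =>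
        LinearMap.range (wordMap Q d K x w.1)) ⟨w, by simpa using hw⟩
  · refine iSup_le fun a => ?_
    rw [radPow, Submodule.map_iSup]
    refine iSup_le ?_
    rintro ⟨w, hw⟩
    have h : wordMap Q d K x (a :: w) = arrowMap Q d K x a ∘ₗ wordMap Q d K x w := by
      simp [wordMap, Module.End.mul_eq_comp]
    rw [← LinearMap.range_comp, ← h]
    exact le_iSup (fun w : {w : List (Fin Q.numArrows) // w.length = l + 1} =>
        LinearMap.range (wordMap Q d K x w.1)) ⟨a :: w, by simpa using hw⟩

theorem radPow_succ_le (x : RepSpace Q d K) (l : ℕ) :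
    radPow Q d K x (l+1) ≤ radPow Q d K x l := by
  induction l with
  | zero => rw [radPow_zero]; exact le_top
  | succ l ih =>
    rw [radPow_succ Q d K x (l+1)]
    conv_rhs => rw [radPow_succ Q d K x l]
    exact iSup_mono fun a => Submodule.map_mono ih

theorem vdim_mono {N N' : Submodule K (Carrier Q d K)} (h : N ≤ N') (i : Fin Q.n) :
    vdim Q d K N i ≤ vdim Q d K N' i :=
  Submodule.finrank_mono (Submodule.map_mono h)

theorem proj_arrow (x : RepSpace Q d K) (a : Fin Q.numArrows) :
    arrowMap Q d K x a = arrowMap Q d K x a ∘ₗ proj Q d K (Q.src a) := by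
  ext m jv
  simp [arrowMap, proj]

theorem vdim_map_arrow (x : RepSpace Q d K) (N : Submodule K (Carrier Q d K)) (i : Fin Q.n) :
    vdim Q d K (⨆ a, N.map (arrowMap Q d K x a)) i ≤
      ∑ a ∈ Finset.univ.filter (fun a => Q.tgt a = i), vdim Q d K N (Q.src a) := by
  have key : (⨆ a, N.map (arrowMap Q d K x a)).map (proj Q d K i) ≤
      ⨆ a ∈ Finset.univ.filter (fun a => Q.tgt a = i),
        (N.map (proj Q d K (Q.src a))).map (proj Q d K i ∘ₗ arrowMap Q d K x a) := by
    rw [Submodule.map_iSup]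
    refine iSup_le fun a => ?_
    by_cases h : Q.tgt a = i
    · refine le_trans ?_ (le_iSup₂ a (by simp [h]))
      rw [← Submodule.map_comp, ← Submodule.map_comp, LinearMap.comp_assoc, ← proj_arrow]
    · have : proj Q d K i ∘ₗ arrowMap Q d K x a = 0 := by
        apply LinearMap.ext
        intro m
        funext jv
        by_cases h1 : jv.1 = i
        · have : ¬ jv.1 = Q.tgt a := fun h2 => h (h2.symm.trans h1)
          simp [proj, arrowMap, this]
        · simp [proj, h1]
      rw [← Submodule.map_comp, this]
      simp
  refine (Submodule.finrank_mono key).trans ((aux_finrank_iSup_le _ _).trans ?_)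
  exact Finset.sum_le_sum fun a _ => Submodule.finrank_map_le _ _

theorem vdim_radPow_le (x : RepSpace Q d K) (hd : ∀ i, vdim Q d K ⊤ i = d i) (l : ℕ) :
    ∀ i, vdim Q d K (radPow Q d K x l) i ≤ auxRho Q d l i := by
  induction l with
  | zero => intro i; rw [radPow_zero, hd]; rfl
  | succ l ih =>
    intro i
    refine le_min ((vdim_mono Q d K (radPow_succ_le Q d K x l) i).trans (ih i)) ?_
    rw [radPow_succ]
    exact (vdim_map_arrow Q d K x _ i).trans (Finset.sum_le_sum fun a _ => ih _)

/-- The coordinate subspace spanned by the first `e i` basis vectors at each vertex `i`. -/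
def auxF (e : Fin Q.n → ℕ) : Submodule K (Carrier Q d K) :=
  Submodule.span K ((fun p => Pi.single p (1 : K)) '' {p : Σ i : Fin Q.n, Fin (d i) | (p.2 : ℕ) < e p.1})

theorem auxF_top : auxF Q d K d = ⊤ := by
  rw [auxF]
  have : {p : Σ i : Fin Q.n, Fin (d i) | (p.2 : ℕ) < d p.1} = Set.univ := by
    ext p; simp
  rw [this, Set.image_univ]
  have := (Pi.basisFun K (Σ i : Fin Q.n, Fin (d i))).span_eq
  convert this using 3
  funext p
  simp

theorem vdim_auxF (e : Fin Q.n → ℕ) (he : ∀ i, e i ≤ d i) (i : Fin Q.n) :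
    vdim Q d K (auxF Q d K e) i = e i := by
  have h : (auxF Q d K e).map (proj Q d K i) = Submodule.span K (Set.range
      (fun k : Fin (e i) => (Pi.single ⟨i, Fin.castLE (he i) k⟩ (1 : K) : Carrier Q d K))) := by
    rw [auxF]
    apply le_antisymm
    · rw [Submodule.map_span_le]
      rintro _ ⟨⟨j, v⟩, hv, rfl⟩
      simp only [Set.mem_setOf_eq] at hv
      by_cases hj : j = i
      · subst hj
        have : proj Q d K j (Pi.single ⟨j, v⟩ 1) = Pi.single ⟨j, v⟩ 1 := by
          funext p
          by_cases hp : p = ⟨j, v⟩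
          · subst hp; simp [proj]
          · simp [proj, hp]
        rw [this]
        exact Submodule.subset_span ⟨⟨v, hv⟩, rfl⟩
      · have : proj Q d K i (Pi.single ⟨j, v⟩ 1) = 0 := by
          funext p
          by_cases hp : p = ⟨j, v⟩
          · subst hp; simp [proj, hj]
          · simp [proj, hp]
        rw [this]
        exact zero_mem _
    · rw [Submodule.span_le]
      rintro _ ⟨k, rfl⟩
      refine ⟨Pi.single ⟨i, Fin.castLE (he i) k⟩ 1, Submodule.subset_span ⟨_, ?_, rfl⟩, ?_⟩
      · simp
      · funext p
        by_cases hp : p = ⟨i, Fin.castLE (he i) k⟩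
        · subst hp; simp [proj]
        · simp [proj, hp]
  rw [vdim, h, finrank_span_eq_card]
  · simp
  · have h1 := (Pi.basisFun K (Σ i : Fin Q.n, Fin (d i))).linearIndependent
    have h2 := h1.comp (fun k : Fin (e i) => (⟨i, Fin.castLE (he i) k⟩ : Σ i : Fin Q.n, Fin (d i)))
      (by intro a b hab; simpa using hab)
    convert h2 using 1
    funext k
    simp

theorem vdim_top (i : Fin Q.n) : vdim Q d K ⊤ i = d i := by
  rw [← auxF_top, vdim_auxF Q d K d (fun _ => le_rfl)]

theorem arrow_single (x : RepSpace Q d K) (a : Fin Q.numArrows) (w : Fin (d (Q.src a))) :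
    arrowMap Q d K x a (Pi.single ⟨Q.src a, w⟩ 1) = fun jv =>
      if h : jv.1 = Q.tgt a then x ⟨a, (Fin.cast (congrArg d h) jv.2, w)⟩ else 0 := by
  funext jv
  by_cases h : jv.1 = Q.tgt a
  · simp only [arrowMap, LinearMap.coe_mk, AddHom.coe_mk, h, dif_pos]
    rw [Finset.sum_eq_single w]
    · simp
    · intro b _ hb
      simp [Pi.single_apply, hb]
    · simp
  · simp [arrowMap, h]

theorem arrow_single_ne (x : RepSpace Q d K) (a : Fin Q.numArrows) (j : Fin Q.n)
    (w : Fin (d j)) (h : j ≠ Q.src a) :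
    arrowMap Q d K x a (Pi.single ⟨j, w⟩ 1) = 0 := by
  funext jv
  have : ∀ w', (⟨Q.src a, w'⟩ : Σ i : Fin Q.n, Fin (d i)) ≠ ⟨j, w⟩ := by
    intro w' e
    exact h (congrArg Sigma.fst e).symm
  simp [arrowMap, Pi.single_apply, this]

theorem exists_generic (L : ℕ) : ∃ x : RepSpace Q d K, ∀ l ≤ L + 1,
    radPow Q d K x l = auxF Q d K (auxRho Q d l) := by
  classical
  let G : Fin Q.n → ℕ → Finset (Σ a : Fin Q.numArrows, Fin (d (Q.src a))) := fun i l =>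
    (Finset.univ.filter (fun a => Q.tgt a = i)).sigma
      (fun a => Finset.univ.filter (fun w : Fin (d (Q.src a)) => (w : ℕ) < auxRho Q d l (Q.src a)))
  have hG : ∀ i, Antitone (G i) := by
    intro i l m hlm
    refine Finset.sigma_mono le_rfl fun a w hw => ?_
    have := auxRho_anti Q d (Q.src a) hlm
    simp only [Finset.mem_filter, Finset.mem_univ, true_and] at hw ⊢
    exact lt_of_lt_of_le hw this
  have hcard : ∀ i l, (G i l).card =
      ∑ a ∈ Finset.univ.filter (fun a => Q.tgt a = i), auxRho Q d l (Q.src a) := by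
    intro i l
    rw [Finset.card_sigma]
    refine Finset.sum_congr rfl fun a _ => ?_
    rw [Fin.card_filter_val_lt]
    exact min_eq_right (auxRho_le Q d l _)
  choose ν hν using fun i => aux_enum L (G i) (hG i)
  let x : RepSpace Q d K := fun c => if ν (Q.tgt c.1) ⟨c.1, c.2.2⟩ = (c.2.1 : ℕ) then 1 else 0
  have hx : ∀ (a : Fin Q.numArrows) (w : Fin (d (Q.src a))) (h : ν (Q.tgt a) ⟨a, w⟩ < d (Q.tgt a)),
      arrowMap Q d K x a (Pi.single ⟨Q.src a, w⟩ 1) = Pi.single ⟨Q.tgt a, ⟨_, h⟩⟩ 1 := by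
    intro a w h
    rw [arrow_single]
    funext ⟨j, v⟩
    by_cases hj : j = Q.tgt a
    · subst hj
      simp only [x, Pi.single_apply, dif_pos, Fin.cast_eq_self, Sigma.mk.injEq, heq_eq_eq, true_and,
        Fin.ext_iff]
      simp only [eq_comm]
    · simp [hj, Pi.single_apply]
  have hx0 : ∀ (a : Fin Q.numArrows) (w : Fin (d (Q.src a))),
      ¬ ν (Q.tgt a) ⟨a, w⟩ < d (Q.tgt a) →
      arrowMap Q d K x a (Pi.single ⟨Q.src a, w⟩ 1) = 0 := by
    intro a w h
    rw [arrow_single]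
    funext ⟨j, v⟩
    by_cases hj : j = Q.tgt a
    · subst hj
      have : ν (Q.tgt a) ⟨a, w⟩ ≠ (v : ℕ) := by have := v.2; omega
      simp [x, this]
    · simp [hj]
  refine ⟨x, fun l => ?_⟩
  induction l with
  | zero => intro _; rw [radPow_zero]; exact (auxF_top Q d K).symm
  | succ l ih =>
    intro hl
    rw [radPow_succ, ih (by omega)]
    apply le_antisymm
    · refine iSup_le fun a => ?_
      rw [auxF, Submodule.map_span_le]
      rintro _ ⟨⟨j, w⟩, hw, rfl⟩
      simp only [Set.mem_setOf_eq] at hw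
      by_cases hj : j = Q.src a
      · subst hj
        simp only
        by_cases h : ν (Q.tgt a) ⟨a, w⟩ < d (Q.tgt a)
        · rw [hx a w h]
          refine Submodule.subset_span ⟨_, ?_, rfl⟩
          have h1 := (hν (Q.tgt a) l (by omega)).1 ⟨a, w⟩ (by simp [G, hw])
          rw [hcard] at h1
          simp only [Set.mem_setOf_eq]
          rw [auxRho_succ]
          exact lt_min h h1
        · rw [hx0 a w h]
          exact zero_mem _
      · simp only
        rw [arrow_single_ne Q d K x a j w hj]
        exact zero_mem _
    · rw [auxF, Submodule.span_le]
      rintro _ ⟨⟨j, v⟩, hv, rfl⟩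
      simp only [Set.mem_setOf_eq] at hv
      rw [auxRho_succ, ← hcard, lt_min_iff] at hv
      obtain ⟨⟨a, w⟩, hb, e⟩ := (hν j l (by omega)).2 v hv.2
      simp only [G, Finset.mem_sigma, Finset.mem_filter, Finset.mem_univ, true_and] at hb
      obtain ⟨rfl, hw⟩ := hb
      have h2 := hx a w (by omega)
      have e2 : (⟨ν (Q.tgt a) ⟨a, w⟩, by omega⟩ : Fin (d (Q.tgt a))) = v := Fin.ext e
      rw [e2] at h2
      refine (le_iSup (fun a => (auxF Q d K (auxRho Q d l)).map (arrowMap Q d K x a)) a) ?_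
      exact ⟨_, Submodule.subset_span ⟨⟨Q.src a, w⟩, hw, rfl⟩, h2⟩

theorem radLayering_sum (L : ℕ) (x : RepSpace Q d K) (l : Fin (L+1)) (i : Fin Q.n) :
    ∑ j ∈ Finset.univ.filter (fun j => j ≤ l), radLayering Q d K L x j i +
      vdim Q d K (radPow Q d K x ((l : ℕ)+1)) i = d i := by
  rw [aux_sum (fun j => radLayering Q d K L x j i) (fun m => vdim Q d K (radPow Q d K x m) i - vdim Q d K (radPow Q d K x (m+1)) i)
    (fun j => rfl) l]
  rw [aux_tele (fun m => vdim Q d K (radPow Q d K x m) i)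
    (fun m => vdim_mono Q d K (radPow_succ_le Q d K x m) i)]
  rw [radPow_zero, vdim_top]

end Aux2

end QuiverData

open QuiverData in
/-- Suppose all paths of `Q` have length at most `L`, and let `T` be the
generic (= minimal, attained on a dense open set) radical layering of the modules in
`Rep_d(KQ)`. Then the dimension vectors of the layers of `T` are given by the recursion
`t⁽⁰⁾ = sup{0, d − d·A}`,
`t⁽ˡ⁺¹⁾ = sup{0, (d − ∑_{k≤l} t⁽ᵏ⁾) − (d − ∑_{k≤l} t⁽ᵏ⁾)·A}` (componentwise suprema in
`ℤⁿ`, `A` the adjacency matrix), expressed here via the partial sums `cumLayer`. -/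
theorem statement_8 (K : Type) [Field K] [IsAlgClosed K]
    (Q : QuiverData) (L : ℕ)
    (hbound : ∀ w : List (Fin Q.numArrows), IsPathWord Q w → w.length ≤ L)
    (d : Fin Q.n → ℕ) (T : Fin (L+1) → Fin Q.n → ℕ)
    (hmin : ∀ x : RepSpace Q d K, dominates T (radLayering Q d K L x))
    (hgen : ∃ U : Set (RepSpace Q d K), IsOpen U ∧ Dense U ∧
      ∀ x ∈ U, radLayering Q d K L x = T) :
    ∀ (l : Fin (L+1)) (i : Fin Q.n),
      (T l i : ℤ) = cumLayer Q (fun j => (d j : ℤ)) (l : ℕ) i -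
        (if (l : ℕ) = 0 then 0 else cumLayer Q (fun j => (d j : ℤ)) ((l : ℕ) - 1) i) := by
  obtain ⟨U, -, hUd, hU⟩ := hgen
  obtain ⟨x, hxU⟩ := hUd.nonempty
  have hT := hU x hxU
  obtain ⟨y, hy⟩ := exists_generic Q d K L
  have hv : ∀ m ≤ L + 1, ∀ i, vdim Q d K (radPow Q d K x m) i = auxRho Q d m i := by
    intro m hm i
    rcases m with _ | m
    · rw [radPow_zero, vdim_top]; rfl
    · have h1 := hmin y ⟨m, by omega⟩ i
      rw [← hT] at h1
      have h2 := radLayering_sum Q d K L x ⟨m, by omega⟩ i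
      have h3 := radLayering_sum Q d K L y ⟨m, by omega⟩ i
      have h4 := vdim_radPow_le Q d K x (vdim_top Q d K) (m+1) i
      simp only at h2 h3
      rw [hy (m+1) hm, vdim_auxF Q d K _ (auxRho_le Q d (m+1))] at h3
      omega
  intro l i
  have hl := l.2
  have e : T l i = auxRho Q d l i - auxRho Q d (l+1) i := by
    rw [← hT, ← hv l (by omega), ← hv (l+1) (by omega)]
    rfl
  have hle := auxRho_succ_le Q d l i
  rw [e, cumLayer_eq, Nat.cast_sub hle]
  by_cases h0 : (l : ℕ) = 0
  · simp [h0, auxRho]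
  · rw [if_neg h0, cumLayer_eq, Nat.sub_add_cancel (by omega)]
    ring
end
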